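/- arXiv:2010.04076 — 3 statements merged into one kernel-verified Lean document; each statement's English description precedes it below -/
import Mathlib

section
/- For every x ∈ ℝ^{q+1}, every w ∈ [0,1], every a > 0, and every c ∈ ℝ, the rearrangement test is location–scale invariant: φ(a(x − c·1_{q+1}), w) = φ(x, w), where 1_{q+1} ∈ ℝ^{q+1} is the vector of ones. -/
/-!
The entries of `S(x, w)` are multiples of differences between a coordinate of `x` and the control
mean, so `S` is unchanged by shifts of `x` and commutes with scaling. Scaling by `a > 0` is
increasing, so it commutes with the decreasing rearrangement, and `T` is linear. Hence scaling
multiplies both sides of the equation `T(S) = T(S^▽)` by `a ≠ 0`.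
-/

open MeasureTheory ProbabilityTheory Filter Set

noncomputable section

/-- Standard normal cumulative distribution function `Φ`. -/
def Phi (x : ℝ) : ℝ := ((gaussianReal 0 1) (Set.Iic x)).toReal

/-- Standard normal density `ϕ`. -/
def stdNormalPDF (y : ℝ) : ℝ := gaussianPDFReal 0 1 y

/-- Mean of the `q` control coordinates of `x = (x₁, x₀₁, …, x₀q)`. -/
def xbar (q : ℕ) (x : Fin (q + 1) → ℝ) : ℝ := (∑ k : Fin q, x k.succ) / q

/-- The weighted, recentered vector `S(x, w)`. -/
def Svec (q : ℕ) (w : ℝ) (x : Fin (q + 1) → ℝ) : Fin (q + 2) → ℝ := fun j =>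
  if j.val = 0 then (1 + w) * (x 0 - xbar q x)
  else if j.val = 1 then (1 - w) * (x 0 - xbar q x)
  else x ⟨j.val - 1, by have := j.isLt; omega⟩ - xbar q x

/-- The decreasing rearrangement `s^▽` of a tuple `s`. -/
def rearr {n : ℕ} (s : Fin n → ℝ) : Fin n → ℝ := fun i => (s ∘ Tuple.sort s) i.rev

/-- The difference-of-means statistic `T(s)`. -/
def Tstat (q : ℕ) (s : Fin (q + 2) → ℝ) : ℝ :=
  (s 0 + s 1) / 2 - (∑ k : Fin q, s ⟨k.val + 2, by have := k.isLt; omega⟩) / q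

/-- The rearrangement test `φ(x, w) = 1{T(S(x,w)) = T(S(x,w)^▽)}`. -/
def phiTest (q : ℕ) (x : Fin (q + 1) → ℝ) (w : ℝ) : ℝ :=
  if Tstat q (Svec q w x) = Tstat q (rearr (Svec q w x)) then 1 else 0

/-- The size bound `ξ_q(w, ρ)`. -/
def xiBound (q : ℕ) (w ρ : ℝ) : ℝ :=
  (1 / 2) ^ (q + 1)
    + (∫ y in Set.Ioi (0 : ℝ), (Phi ((1 - w) * ρ * y)) ^ (q - 1) * stdNormalPDF y)
    + sInf ((fun t : ℝ => Phi (Real.sqrt ((q : ℝ) - 1) * w * t) ^ (q - 1)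
        + 2 * Phi (-(q : ℝ) * t)) '' Set.Ioi 0)

/-- The lower bound on power from Proposition 1. -/
def powerBound (q : ℕ) (w δ σ : ℝ) (σs : Fin q → ℝ) : ℝ :=
  2 ^ q * sSup ((fun t : ℝ => Phi (δ / σ - ((1 + w) / (1 - w)) * t) *
      ∏ k : Fin q, (Phi ((σ / σs k) * t) - 1 / 2)) '' Set.Ici 0)

lemma xbar_smul {q : ℕ} (a : ℝ) (x : Fin (q + 1) → ℝ) : xbar q (a • x) = a * xbar q x := by
  simp only [xbar, Pi.smul_apply, smul_eq_mul, ← Finset.mul_sum, mul_div_assoc]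

lemma xbar_sub_const {q : ℕ} (hq : q ≠ 0) (x : Fin (q + 1) → ℝ) (c : ℝ) :
    xbar q (x - Function.const _ c) = xbar q x - c := by
  have hq' : (q : ℝ) ≠ 0 := Nat.cast_ne_zero.mpr hq
  simp only [xbar, Pi.sub_apply, Function.const_apply, Finset.sum_sub_distrib, Finset.sum_const,
    Finset.card_univ, Fintype.card_fin, nsmul_eq_mul, sub_div, mul_div_cancel_left₀ c hq']

lemma Svec_smul {q : ℕ} (w a : ℝ) (x : Fin (q + 1) → ℝ) :
    Svec q w (a • x) = a • Svec q w x := by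
  funext j
  simp only [Svec, xbar_smul, Pi.smul_apply, smul_eq_mul]
  split_ifs <;> ring

lemma Svec_sub_const {q : ℕ} (hq : q ≠ 0) (w : ℝ) (x : Fin (q + 1) → ℝ) (c : ℝ) :
    Svec q w (x - Function.const _ c) = Svec q w x := by
  funext j
  simp only [Svec, xbar_sub_const hq, Pi.sub_apply, Function.const_apply, sub_sub_sub_cancel_right]

lemma rearr_comp_of_monotone {n : ℕ} {f : ℝ → ℝ} (hf : Monotone f) (s : Fin n → ℝ) :
    rearr (f ∘ s) = f ∘ rearr s := by
  -- The two sorting permutations may break ties differently, but the sorted tuples agree.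
  have sorted_eq : (f ∘ s) ∘ Tuple.sort (f ∘ s) = (f ∘ s) ∘ Tuple.sort s :=
    Tuple.unique_monotone (Tuple.monotone_sort (f ∘ s)) (hf.comp (Tuple.monotone_sort s))
  exact funext fun i => congrFun sorted_eq i.rev

lemma rearr_smul {n : ℕ} {a : ℝ} (ha : 0 ≤ a) (s : Fin n → ℝ) :
    rearr (a • s) = a • rearr s :=
  rearr_comp_of_monotone (monotone_mul_left_of_nonneg ha) s

lemma Tstat_smul {q : ℕ} (a : ℝ) (s : Fin (q + 2) → ℝ) :
    Tstat q (a • s) = a * Tstat q s := by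
  simp only [Tstat, Pi.smul_apply, smul_eq_mul, ← Finset.mul_sum]
  ring

lemma phiTest_smul {q : ℕ} {a : ℝ} (ha : 0 < a) (x : Fin (q + 1) → ℝ) (w : ℝ) :
    phiTest q (a • x) w = phiTest q x w := by
  simp only [phiTest, Svec_smul, rearr_smul ha.le, Tstat_smul, mul_right_inj' ha.ne']

lemma phiTest_sub_const {q : ℕ} (hq : q ≠ 0) (x : Fin (q + 1) → ℝ) (c w : ℝ) :
    phiTest q (x - Function.const _ c) w = phiTest q x w := by
  simp only [phiTest, Svec_sub_const hq]

theorem statement1_general {q : ℕ} (hq : q ≠ 0) (x : Fin (q + 1) → ℝ) (w : ℝ) {a : ℝ}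
    (ha : 0 < a) (c : ℝ) : phiTest q (fun i => a * (x i - c)) w = phiTest q x w :=
  calc phiTest q (a • (x - Function.const _ c)) w
    _ = phiTest q (x - Function.const _ c) w := phiTest_smul ha _ w
    _ = phiTest q x w := phiTest_sub_const hq x c w

/-- location-scale invariance of the rearrangement test. -/
theorem statement1 (q : ℕ) (hq : 2 ≤ q) (x : Fin (q + 1) → ℝ) (w : ℝ)
    (hw : w ∈ Set.Icc (0 : ℝ) 1) (a : ℝ) (ha : 0 < a) (c : ℝ) :
    phiTest q (fun i => a * (x i - c)) w = phiTest q x w :=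
  statement1_general (by omega) x w ha c

end
end

section
/- (Proposition 1, properties of the power bound.) Let q ≥ 2, w ∈ (0,1), and σ, σ_1, …, σ_q > 0. For δ > 0 define B(δ) = 2^q · sup_{t ≥ 0} Φ(δ/σ − ((1+w)/(1−w)) t) ∏_{k=1}^q (Φ((σ/σ_k) t) − 1/2). Then: (i) for every δ > 0 the supremum is attained at some t ∈ (0,∞); (ii) B(δ) > 0 for every δ > 0; and (iii) B(δ) → 1 as δ → ∞. -/
/-!
Only four features of the standard normal law matter: it is a probability law on `ℝ` that is
symmetric, atomless and of full support. Let `F` be the distribution function of such a law, so that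
`F 0 = 1/2`, and let `f s t = F (s - c t) ∏ₖ (F (aₖ t) - 1/2)` with `c, aₖ > 0`.
For fixed `s`, the continuous function `f s` vanishes at `t = 0` through the product and tends to
`0` as `t → ∞` through the first factor, but is positive in between, so its maximum over `[0, ∞)`
is attained at some `t > 0` and is positive. Every factor of the product is at most `1/2`, which
gives `2^q sup f s ≤ 1`; at the midpoint `t = s / (2c)` both `s - c t` and `t` tend to `∞` with `s`,
so this bound is attained in the limit.
-/

open MeasureTheory ProbabilityTheory Filter Set

noncomputable section

open scoped Topology

lemma exists_isMaxOn_Ici_of_tendsto_atTop_lt {α β : Type*} [LinearOrder α] [TopologicalSpace α]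
    [CompactIccSpace α] [ClosedIciTopology α] [LinearOrder β] [TopologicalSpace β]
    [OrderClosedTopology β] {f : α → β} {a b : α} {l : β}
    (hf : ContinuousOn f (Ici a)) (hlim : Tendsto f atTop (𝓝 l)) (hb : a ≤ b) (hlt : l < f b) :
    ∃ t ∈ Ici a, IsMaxOn f (Ici a) t := by
  have hle : cocompact α ⊓ 𝓟 (Ici a) ≤ atTop := by
    intro u hu
    have : Nonempty α := ⟨a⟩
    obtain ⟨N, hN⟩ := mem_atTop_sets.1 hu
    exact mem_inf_principal.2 <| mem_cocompact.2 ⟨Icc a N, isCompact_Icc,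
      fun x hx hax ↦ hN x (not_le.1 fun hxN ↦ hx ⟨hax, hxN⟩).le⟩
  exact hf.exists_isMaxOn' isClosed_Ici hb (hle (hlim.eventually_le_const hlt))

section DistributionFunction

variable {μ : Measure ℝ} [IsProbabilityMeasure μ] {x : ℝ}

lemma continuous_cdf [NullSingletonClass μ] : Continuous (cdf μ) := by
  refine continuous_iff_continuousAt.2 fun x ↦ ?_
  have hjump := (cdf μ).measure_singleton x
  rw [measure_cdf, measure_singleton, eq_comm, ENNReal.ofReal_eq_zero, sub_nonpos] at hjump
  rw [(monotone_cdf μ).continuousAt_iff_leftLim_eq_rightLim, StieltjesFunction.rightLim_eq]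
  exact ((monotone_cdf μ).leftLim_le le_rfl).antisymm hjump

lemma strictMono_cdf [μ.IsOpenPosMeasure] : StrictMono (cdf μ) := by
  intro x y hxy
  have hpos : 0 < μ (Ioc x y) :=
    (isOpen_Ioo.measure_pos μ (nonempty_Ioo.2 hxy)).trans_le (measure_mono Ioo_subset_Ioc_self)
  rwa [← measure_cdf μ, StieltjesFunction.measure_Ioc, ENNReal.ofReal_pos, sub_pos] at hpos

lemma cdf_pos [μ.IsOpenPosMeasure] (x : ℝ) : 0 < cdf μ x :=
  (cdf_nonneg μ (x - 1)).trans_lt (strictMono_cdf (sub_one_lt x))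

lemma measureReal_Ici_eq_cdf_neg [μ.IsNegInvariant] (x : ℝ) : μ.real (Ici x) = cdf μ (-x) := by
  rw [cdf_eq_real, measureReal_def, measureReal_def, ← Measure.measure_neg μ (Iic (-x)),
    neg_Iic, neg_neg]

lemma half_le_cdf [μ.IsNegInvariant] (hx : 0 ≤ x) : 1 / 2 ≤ cdf μ x := by
  have hcover : 1 ≤ cdf μ 0 + cdf μ 0 := calc
    (1 : ℝ) = μ.real (Iic 0 ∪ Ici 0) := by rw [Iic_union_Ici, probReal_univ]
    _ ≤ μ.real (Iic 0) + μ.real (Ici 0) := measureReal_union_le _ _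
    _ = cdf μ 0 + cdf μ 0 := by rw [measureReal_Ici_eq_cdf_neg, neg_zero, cdf_eq_real]
  linarith [monotone_cdf μ hx]

lemma half_lt_cdf [μ.IsNegInvariant] [μ.IsOpenPosMeasure] (hx : 0 < x) : 1 / 2 < cdf μ x :=
  (half_le_cdf le_rfl).trans_lt (strictMono_cdf hx)

lemma cdf_neg [μ.IsNegInvariant] [NullSingletonClass μ] (x : ℝ) : cdf μ (-x) = 1 - cdf μ x := by
  rw [← measureReal_Ici_eq_cdf_neg, ← measureReal_congr Ioi_ae_eq_Ici, ← compl_Iic,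
    probReal_compl_eq_one_sub measurableSet_Iic, cdf_eq_real]

lemma cdf_zero [μ.IsNegInvariant] [NullSingletonClass μ] : cdf μ 0 = 1 / 2 := by
  have h := cdf_neg (μ := μ) 0
  rw [neg_zero] at h
  linarith

end DistributionFunction

/-- The function of `t` whose supremum over `t ≥ 0` enters the power bound, for a noise law `μ` in
place of the standard normal one. In the notation of the power bound, `s = δ / σ`,
`c = (1 + w) / (1 - w)` and `a k = σ / σ_k`. -/
def powerObjective {ι : Type*} [Fintype ι] (μ : Measure ℝ) (c : ℝ) (a : ι → ℝ) (s t : ℝ) : ℝ :=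
  cdf μ (s - c * t) * ∏ k, (cdf μ (a k * t) - 1 / 2)

/-- The power bound for a noise law `μ` in place of the standard normal one, with controls indexed
by an arbitrary finite type; see `powerBound_eq_powerBoundOfLaw` for the normal case. -/
def powerBoundOfLaw {ι : Type*} [Fintype ι] (μ : Measure ℝ) (w δ σ : ℝ) (σs : ι → ℝ) : ℝ :=
  2 ^ Fintype.card ι *
    sSup (powerObjective μ ((1 + w) / (1 - w)) (fun k ↦ σ / σs k) (δ / σ) '' Ici 0)

section PowerObjective

variable {ι : Type*} [Fintype ι] {μ : Measure ℝ} {c : ℝ} {a : ι → ℝ} {t : ℝ}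

lemma tendsto_powerObjective_midpoint (hc : 0 < c) (ha : ∀ k, 0 < a k) :
    Tendsto (fun s ↦ powerObjective μ c a s (s / (2 * c))) atTop
      (𝓝 ((1 / 2) ^ Fintype.card ι)) := by
  have hfirst : Tendsto (fun s ↦ cdf μ (s - c * (s / (2 * c)))) atTop (𝓝 1) := by
    have harg (s : ℝ) : s - c * (s / (2 * c)) = s / 2 := by field_simp; ring
    simp only [harg]
    exact (tendsto_cdf_atTop μ).comp (tendsto_id.atTop_div_const two_pos)
  have hfactor (k : ι) :
      Tendsto (fun s ↦ cdf μ (a k * (s / (2 * c))) - 1 / 2) atTop (𝓝 (1 - 1 / 2)) :=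
    ((tendsto_cdf_atTop μ).comp
      ((tendsto_id.atTop_div_const (by positivity)).const_mul_atTop (ha k))).sub_const _
  have hprod := hfirst.mul (tendsto_finsetProd Finset.univ fun k _ ↦ hfactor k)
  rwa [one_mul, Finset.prod_const, Finset.card_univ, sub_half] at hprod

variable [IsProbabilityMeasure μ]

lemma continuous_powerObjective [NullSingletonClass μ] (s : ℝ) :
    Continuous (powerObjective μ c a s) := by
  have := continuous_cdf (μ := μ)
  unfold powerObjective
  fun_prop

lemma powerObjective_zero [μ.IsNegInvariant] [NullSingletonClass μ] [Nonempty ι] (s : ℝ) :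
    powerObjective μ c a s 0 = 0 := by
  simp [powerObjective, cdf_zero]

lemma powerObjective_pos [μ.IsNegInvariant] [μ.IsOpenPosMeasure] (ha : ∀ k, 0 < a k) (s : ℝ)
    (ht : 0 < t) : 0 < powerObjective μ c a s t :=
  mul_pos (cdf_pos _)
    (Finset.prod_pos fun k _ ↦ sub_pos.2 (half_lt_cdf (mul_pos (ha k) ht)))

lemma prod_cdf_sub_half_nonneg [μ.IsNegInvariant] (ha : ∀ k, 0 ≤ a k) (ht : 0 ≤ t) :
    0 ≤ ∏ k, (cdf μ (a k * t) - 1 / 2) :=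
  Finset.prod_nonneg fun k _ ↦ sub_nonneg.2 (half_le_cdf (mul_nonneg (ha k) ht))

lemma prod_cdf_sub_half_le [μ.IsNegInvariant] (ha : ∀ k, 0 ≤ a k) (ht : 0 ≤ t) :
    ∏ k, (cdf μ (a k * t) - 1 / 2) ≤ (1 / 2) ^ Fintype.card ι := calc
  ∏ k, (cdf μ (a k * t) - 1 / 2) ≤ ∏ _k : ι, (1 / 2 : ℝ) :=
    Finset.prod_le_prod (fun k _ ↦ sub_nonneg.2 (half_le_cdf (mul_nonneg (ha k) ht)))
      fun k _ ↦ by linarith [cdf_le_one μ (a k * t)]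
  _ = (1 / 2) ^ Fintype.card ι := by rw [Finset.prod_const, Finset.card_univ]

lemma powerObjective_nonneg [μ.IsNegInvariant] (ha : ∀ k, 0 ≤ a k) (s : ℝ) (ht : 0 ≤ t) :
    0 ≤ powerObjective μ c a s t :=
  mul_nonneg (cdf_nonneg μ _) (prod_cdf_sub_half_nonneg ha ht)

lemma powerObjective_le_cdf [μ.IsNegInvariant] (ha : ∀ k, 0 ≤ a k) (s : ℝ) (ht : 0 ≤ t) :
    powerObjective μ c a s t ≤ cdf μ (s - c * t) :=
  mul_le_of_le_one_right (cdf_nonneg μ _)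
    ((prod_cdf_sub_half_le ha ht).trans (pow_le_one₀ (by norm_num) (by norm_num)))

lemma powerObjective_le_half_pow [μ.IsNegInvariant] (ha : ∀ k, 0 ≤ a k) (s : ℝ) (ht : 0 ≤ t) :
    powerObjective μ c a s t ≤ (1 / 2) ^ Fintype.card ι :=
  (mul_le_of_le_one_left (prod_cdf_sub_half_nonneg ha ht) (cdf_le_one μ _)).trans
    (prod_cdf_sub_half_le ha ht)

lemma tendsto_powerObjective_atTop [μ.IsNegInvariant] (hc : 0 < c) (ha : ∀ k, 0 ≤ a k) (s : ℝ) :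
    Tendsto (powerObjective μ c a s) atTop (𝓝 0) := by
  have harg : Tendsto (fun t ↦ s - c * t) atTop atBot :=
    tendsto_atBot_add_const_left atTop s
      (tendsto_neg_atTop_atBot.comp (tendsto_id.const_mul_atTop hc))
  refine squeeze_zero' ?_ ?_ ((tendsto_cdf_atBot μ).comp harg)
  · filter_upwards [eventually_ge_atTop 0] with t ht using powerObjective_nonneg ha s ht
  · filter_upwards [eventually_ge_atTop 0] with t ht using powerObjective_le_cdf ha s ht

lemma exists_pos_isGreatest_powerObjective [μ.IsNegInvariant] [NullSingletonClass μ]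
    [μ.IsOpenPosMeasure] [Nonempty ι] (hc : 0 < c) (ha : ∀ k, 0 < a k) (s : ℝ) :
    ∃ t > 0, IsGreatest (powerObjective μ c a s '' Ici 0) (powerObjective μ c a s t) := by
  have hpos : 0 < powerObjective μ c a s 1 := powerObjective_pos ha s one_pos
  obtain ⟨t, ht, hmax⟩ := exists_isMaxOn_Ici_of_tendsto_atTop_lt
    (continuous_powerObjective s).continuousOn
    (tendsto_powerObjective_atTop hc (fun k ↦ (ha k).le) s) zero_le_one hpos
  have ht0 : t ≠ 0 := by
    rintro rfl
    have hle : powerObjective μ c a s 1 ≤ powerObjective μ c a s 0 := hmax (mem_Ici.2 zero_le_one)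
    rw [powerObjective_zero] at hle
    exact hpos.not_ge hle
  exact ⟨t, lt_of_le_of_ne ht ht0.symm, mem_image_of_mem _ ht, forall_mem_image.2 hmax⟩

lemma tendsto_sSup_powerObjective [μ.IsNegInvariant] (hc : 0 < c) (ha : ∀ k, 0 < a k) :
    Tendsto (fun s ↦ sSup (powerObjective μ c a s '' Ici 0)) atTop
      (𝓝 ((1 / 2) ^ Fintype.card ι)) := by
  have hbound (s : ℝ) :
      (1 / 2 : ℝ) ^ Fintype.card ι ∈ upperBounds (powerObjective μ c a s '' Ici 0) :=
    forall_mem_image.2 fun _ ht ↦ powerObjective_le_half_pow (fun k ↦ (ha k).le) s ht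
  refine tendsto_of_tendsto_of_tendsto_of_le_of_le'
    (tendsto_powerObjective_midpoint (μ := μ) hc ha) tendsto_const_nhds ?_
    (.of_forall fun s ↦ csSup_le (nonempty_Ici.image _) (hbound s))
  filter_upwards [eventually_ge_atTop 0] with s hs
  exact le_csSup ⟨_, hbound s⟩ (mem_image_of_mem _ (div_nonneg hs (by positivity)))

end PowerObjective

theorem statement6_general {ι : Type*} [Fintype ι] [Nonempty ι] {μ : Measure ℝ}
    [IsProbabilityMeasure μ] [μ.IsNegInvariant] [NullSingletonClass μ] [μ.IsOpenPosMeasure]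
    {w : ℝ} (hw : w ∈ Ioo (-1) 1) {σ : ℝ} (hσ : 0 < σ) {σs : ι → ℝ} (hσs : ∀ k, 0 < σs k) :
    (∀ δ, ∃ t ∈ Ioi 0,
      powerObjective μ ((1 + w) / (1 - w)) (fun k ↦ σ / σs k) (δ / σ) t =
        sSup (powerObjective μ ((1 + w) / (1 - w)) (fun k ↦ σ / σs k) (δ / σ) '' Ici 0)) ∧
    (∀ δ, 0 < powerBoundOfLaw μ w δ σ σs) ∧
    Tendsto (fun δ ↦ powerBoundOfLaw μ w δ σ σs) atTop (𝓝 1) := by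
  have hc : 0 < (1 + w) / (1 - w) := div_pos (by linarith [hw.1]) (sub_pos.2 hw.2)
  have ha (k : ι) : 0 < σ / σs k := div_pos hσ (hσs k)
  have hattained := exists_pos_isGreatest_powerObjective (μ := μ) hc ha
  refine ⟨fun δ ↦ ?_, fun δ ↦ ?_, ?_⟩
  · obtain ⟨t, ht, hgreatest⟩ := hattained (δ / σ)
    exact ⟨t, ht, hgreatest.csSup_eq.symm⟩
  · obtain ⟨t, ht, hgreatest⟩ := hattained (δ / σ)
    refine mul_pos (by positivity) ?_
    rw [hgreatest.csSup_eq]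
    exact powerObjective_pos ha _ ht
  · have hlim := ((tendsto_sSup_powerObjective (μ := μ) hc ha).comp
      (tendsto_id.atTop_div_const hσ)).const_mul (2 ^ Fintype.card ι)
    rwa [← mul_pow, mul_one_div_cancel two_ne_zero, one_pow] at hlim

section Gaussian

variable {m : ℝ} {v : NNReal}

instance isNegInvariant_gaussianReal : (gaussianReal 0 v).IsNegInvariant :=
  ⟨by rw [Measure.neg, gaussianReal_map_neg, neg_zero]⟩

instance nullSingletonClass_gaussianReal_of_neZero [NeZero v] :
    NullSingletonClass (gaussianReal m v) :=
  nullSingletonClass_gaussianReal (NeZero.ne v)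

instance isOpenPosMeasure_gaussianReal [NeZero v] : (gaussianReal m v).IsOpenPosMeasure :=
  (gaussianReal_absolutelyContinuous' m (NeZero.ne v)).isOpenPosMeasure

end Gaussian

lemma Phi_eq_cdf_gaussianReal (x : ℝ) : Phi x = cdf (gaussianReal 0 1) x :=
  (cdf_eq_real _ x).symm

lemma powerBound_eq_powerBoundOfLaw (q : ℕ) (w δ σ : ℝ) (σs : Fin q → ℝ) :
    powerBound q w δ σ σs = powerBoundOfLaw (gaussianReal 0 1) w δ σ σs := by
  simp only [powerBound, powerBoundOfLaw, Fintype.card_fin, Phi_eq_cdf_gaussianReal]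
  rfl

/-- Proposition 1, properties of the power bound: the supremum is
attained at an interior point, the bound is strictly positive, and it tends to
one as `δ → ∞`. -/
theorem statement6 (q : ℕ) (hq : 2 ≤ q) (w : ℝ) (hw : w ∈ Set.Ioo (0 : ℝ) 1)
    (σ : ℝ) (hσ : 0 < σ) (σs : Fin q → ℝ) (hσs : ∀ k, 0 < σs k) :
    (∀ δ : ℝ, 0 < δ → ∃ t ∈ Set.Ioi (0 : ℝ),
      Phi (δ / σ - ((1 + w) / (1 - w)) * t) * ∏ k : Fin q, (Phi ((σ / σs k) * t) - 1 / 2)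
        = sSup ((fun t : ℝ => Phi (δ / σ - ((1 + w) / (1 - w)) * t) *
            ∏ k : Fin q, (Phi ((σ / σs k) * t) - 1 / 2)) '' Set.Ici 0)) ∧
    (∀ δ : ℝ, 0 < δ → 0 < powerBound q w δ σ σs) ∧
    Tendsto (fun δ : ℝ => powerBound q w δ σ σs) atTop (nhds 1) := by
  have : NeZero q := ⟨by omega⟩
  simp only [powerBound_eq_powerBoundOfLaw, Phi_eq_cdf_gaussianReal]
  obtain ⟨hmax, hpos, hlim⟩ := statement6_general (μ := gaussianReal 0 1)
    (Ioo_subset_Ioo_left (by norm_num) hw) hσ hσs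
  exact ⟨fun δ _ ↦ hmax δ, fun δ _ ↦ hpos δ, hlim⟩

end
end

section
/- (Theorem 2, asymptotic size with a single treated cluster.) Let q ≥ 2 and let θ̂_n = (θ̂_{n,1}, θ̂_{n,0,1}, …, θ̂_{n,0,q}) be random vectors in ℝ^{q+1}. Let θ_0 ∈ ℝ, σ > 0, and σ_1, …, σ_q ≥ 0 with at most one σ_k = 0, and suppose √n (θ̂_{n,1} − θ_0, θ̂_{n,0,1} − θ_0, …, θ̂_{n,0,q} − θ_0) converges in distribution to the normal law N(0, diag(σ², σ_1², …, σ_q²)) on ℝ^{q+1}. Let 0 < σ_low ≤ σ_high < ∞ be such that σ ≤ σ_high and σ_k ≥ σ_low for at least q−1 of the indices k, and let w ∈ (0,1) satisfy ξ_q(w, σ_high/σ_low) ≤ α. Then lim_{n→∞} E φ(θ̂_n, w) exists and is at most α. -/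
/-!
The test rejects exactly when every control coordinate is at most
`N(x) = (1 - w) x₁ + w x̄₀`, a closed condition that is invariant under shifts and positive
scalings. By the portmanteau theorem it is enough to bound the probability of this event for the
Gaussian limit `X`.

Rescale the coordinates to `Y = m X`, with weights `m` such that all control coordinates except the
one of smallest variance, say `j`, have variance one, and all weights are at most `m₁`. On the
rejection event Chebyshev's sum inequality, applied to the nonnegative products
`(m₁ - mₖ) (N(X) - Xₖ)`, gives `N(X) N(m) ≤ N(Y)`, hence `Yₖ ≤ θₖ N(Y)` with `θₖ = mₖ / N(m)` of
mean at most one over `k ≠ j`.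

* If `N(Y) ≤ 0`, then `q - 1` independent standard normal variables are nonpositive, which has
  probability `2^{-(q-1)}`; this is a lower bound for the infimum in `ξ_q`.
* If `N(Y) > 0`, condition on `N(Y)`. The regression residuals of the `Yₖ` on `N(Y)` are negatively
  correlated, so their joint distribution function is at most the product of the marginal ones, and
  since `Φ` is log-concave the levels may be replaced by their mean. The resulting bound has the
  form `Φ(s z)^{q-1}` with slope `s ≤ (1 - w) ρ`, and integrating it over `z > 0` gives the integral
  in `ξ_q`.
-/

open MeasureTheory ProbabilityTheory Filter Set

noncomputable section

/-! ### The standard normal distribution function -/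

lemma Phi_eq_cdf : Phi = cdf (gaussianReal 0 1) := funext fun x => (cdf_eq_real _ x).symm

lemma Phi_nonneg (x : ℝ) : 0 ≤ Phi x := Phi_eq_cdf ▸ cdf_nonneg _ x

lemma Phi_le_one (x : ℝ) : Phi x ≤ 1 := Phi_eq_cdf ▸ cdf_le_one _ x

lemma Phi_mono : Monotone Phi := Phi_eq_cdf ▸ monotone_cdf _

lemma ofReal_Phi (x : ℝ) : ENNReal.ofReal (Phi x) = gaussianReal 0 1 (Iic x) :=
  Phi_eq_cdf ▸ ofReal_cdf _ x

lemma Phi_pos (x : ℝ) : 0 < Phi x := by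
  refine ENNReal.toReal_pos (fun h => ?_) (measure_ne_top _ _)
  simpa only [Real.volume_Iic, ENNReal.top_ne_zero] using
    gaussianReal_absolutelyContinuous' 0 one_ne_zero h

lemma Phi_neg (x : ℝ) : Phi (-x) = 1 - Phi x := by
  have : NullSingletonClass (gaussianReal 0 1) := nullSingletonClass_gaussianReal one_ne_zero
  calc Phi (-x) = ((gaussianReal 0 1).map fun y => -y).real (Iic (-x)) := by
        rw [gaussianReal_map_neg, neg_zero]; rfl
    _ = (gaussianReal 0 1).real (Ici x) := by
        rw [map_measureReal_apply measurable_neg measurableSet_Iic]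
        congr 1
        ext y
        simp only [mem_preimage, mem_Iic, mem_Ici, neg_le_neg_iff]
    _ = (gaussianReal 0 1).real (Iic x)ᶜ := by
        rw [compl_Iic]; exact measureReal_congr Ioi_ae_eq_Ici.symm
    _ = 1 - Phi x := probReal_compl_eq_one_sub measurableSet_Iic

lemma Phi_zero : Phi 0 = 1 / 2 := by
  have h := Phi_neg 0
  rw [neg_zero] at h
  linarith

lemma Phi_sub_Phi (a b : ℝ) : Phi b - Phi a = ∫ y in a..b, gaussianPDFReal 0 1 y := by
  have hPhi (x : ℝ) : Phi x = ∫ y in Iic x, gaussianPDFReal 0 1 y := by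
    rw [Phi, gaussianReal_apply_eq_integral _ one_ne_zero, ENNReal.toReal_ofReal]
    exact integral_nonneg fun y => gaussianPDFReal_nonneg 0 1 y
  have hInt (s : Set ℝ) : IntegrableOn (gaussianPDFReal 0 1) s :=
    (integrable_gaussianPDFReal 0 1).integrableOn
  rw [hPhi, hPhi, intervalIntegral.integral_Iic_sub_Iic (hInt _) (hInt _)]

lemma hasDerivAt_gaussianPDFReal_std (x : ℝ) :
    HasDerivAt (gaussianPDFReal 0 1) (-x * gaussianPDFReal 0 1 x) x := by
  have hexponent : HasDerivAt (fun y : ℝ => -(y - 0) ^ 2 / (2 * ((1 : NNReal) : ℝ))) (-x) x := by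
    refine ((((hasDerivAt_id' x).sub_const 0).pow 2).neg.div_const _).congr_deriv ?_
    push_cast
    ring
  rw [gaussianPDFReal_def]
  exact (hexponent.exp.const_mul _).congr_deriv (by ring)

lemma hasDerivAt_Phi (x : ℝ) : HasDerivAt Phi (gaussianPDFReal 0 1 x) x := by
  have hcont : Continuous (gaussianPDFReal 0 1) :=
    continuous_iff_continuousAt.2 fun y => (hasDerivAt_gaussianPDFReal_std y).continuousAt
  have hPhi : Phi = fun y => (∫ z in (0 : ℝ)..y, gaussianPDFReal 0 1 z) + Phi 0 := by
    funext y
    rw [← Phi_sub_Phi, sub_add_cancel]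
  rw [hPhi]
  exact (hcont.integral_hasStrictDerivAt 0 x).hasDerivAt.add_const _

lemma tendsto_gaussianPDFReal_std_atBot : Tendsto (gaussianPDFReal 0 1) atBot (nhds 0) := by
  have hexponent : Tendsto (fun x : ℝ => -(x - 0) ^ 2 / (2 * ((1 : NNReal) : ℝ))) atBot atBot := by
    have hsq : Tendsto (fun x : ℝ => x ^ 2) atBot atTop := by
      simpa only [Function.comp_def, sq_abs] using
        (tendsto_pow_atTop two_ne_zero).comp (tendsto_abs_atBot_atTop (G := ℝ))
    refine (tendsto_neg_atTop_atBot.comp (hsq.atTop_div_const two_pos)).congr fun x => ?_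
    simp only [Function.comp_apply, NNReal.coe_one]
    ring
  rw [gaussianPDFReal_def]
  simpa only [Function.comp_def, mul_zero] using
    (Real.tendsto_exp_atBot.comp hexponent).const_mul (√(2 * Real.pi * ((1 : NNReal) : ℝ)))⁻¹

/-- The function `y ↦ x Φ(y) + ϕ(y)` vanishes at `-∞` and has the nonnegative derivative
`(x - y) ϕ(y)` on `(-∞, x]`. -/
lemma mul_Phi_add_gaussianPDFReal_nonneg (x : ℝ) : 0 ≤ x * Phi x + gaussianPDFReal 0 1 x := by
  have hderiv (y : ℝ) : HasDerivAt (fun y => x * Phi y + gaussianPDFReal 0 1 y)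
      ((x - y) * gaussianPDFReal 0 1 y) y :=
    (((hasDerivAt_Phi y).const_mul x).add (hasDerivAt_gaussianPDFReal_std y)).congr_deriv (by ring)
  have hmono : MonotoneOn (fun y => x * Phi y + gaussianPDFReal 0 1 y) (Iic x) := by
    refine monotoneOn_of_hasDerivWithinAt_nonneg (convex_Iic x)
      (fun y _ => (hderiv y).continuousAt.continuousWithinAt)
      (fun y _ => (hderiv y).hasDerivWithinAt) fun y hy => ?_
    rw [interior_Iic] at hy
    exact mul_nonneg (sub_nonneg.2 (le_of_lt hy)) (gaussianPDFReal_nonneg 0 1 y)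
  have hlim : Tendsto (fun y => x * Phi y + gaussianPDFReal 0 1 y) atBot (nhds 0) := by
    have hPhi : Tendsto Phi atBot (nhds 0) := Phi_eq_cdf ▸ tendsto_cdf_atBot _
    simpa only [mul_zero, add_zero] using
      (hPhi.const_mul x).add tendsto_gaussianPDFReal_std_atBot
  refine le_of_tendsto hlim ?_
  filter_upwards [eventually_le_atBot x] with y hy
  exact hmono hy self_mem_Iic hy

lemma concaveOn_log_Phi : ConcaveOn ℝ univ (fun x => Real.log (Phi x)) := by
  have hderiv (x : ℝ) :
      HasDerivAt (fun x => Real.log (Phi x)) (gaussianPDFReal 0 1 x / Phi x) x :=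
    (hasDerivAt_Phi x).log (Phi_pos x).ne'
  have hderiv₂ (x : ℝ) : HasDerivAt (fun x => gaussianPDFReal 0 1 x / Phi x)
      ((-x * gaussianPDFReal 0 1 x * Phi x - gaussianPDFReal 0 1 x * gaussianPDFReal 0 1 x)
        / Phi x ^ 2) x :=
    (hasDerivAt_gaussianPDFReal_std x).div (hasDerivAt_Phi x) (Phi_pos x).ne'
  refine Antitone.concaveOn_univ_of_deriv (fun x => (hderiv x).differentiableAt) ?_
  rw [deriv_eq hderiv]
  refine antitone_of_hasDerivAt_nonpos hderiv₂ fun x => ?_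
  refine div_nonpos_of_nonpos_of_nonneg ?_ (sq_nonneg _)
  linarith [mul_nonneg (gaussianPDFReal_nonneg 0 1 x) (mul_Phi_add_gaussianPDFReal_nonneg x)]

lemma prod_Phi_le_pow_card {κ : Type*} (t : Finset κ) (y : κ → ℝ) (m : ℝ)
    (h : ∑ k ∈ t, y k ≤ t.card * m) : ∏ k ∈ t, Phi (y k) ≤ Phi m ^ t.card := by
  rcases t.eq_empty_or_nonempty with rfl | ht
  · simp only [Finset.prod_empty, Finset.card_empty, pow_zero, le_refl]
  have hcard : (0 : ℝ) < t.card := by exact_mod_cast ht.card_pos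
  have hmean : (t.card : ℝ)⁻¹ * ∑ k ∈ t, y k ≤ m := by rwa [inv_mul_le_iff₀ hcard]
  have hjensen := concaveOn_log_Phi.le_map_sum (t := t) (w := fun _ => (t.card : ℝ)⁻¹) (p := y)
    (fun _ _ => by positivity)
    (by rw [Finset.sum_const, nsmul_eq_mul, mul_inv_cancel₀ hcard.ne']) (fun _ _ => mem_univ _)
  simp only [smul_eq_mul, ← Finset.mul_sum] at hjensen
  have hlog : ∑ k ∈ t, Real.log (Phi (y k)) ≤ t.card * Real.log (Phi m) := by
    rw [← inv_mul_le_iff₀ hcard]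
    exact hjensen.trans (Real.log_le_log (Phi_pos _) (Phi_mono hmean))
  rwa [← Real.log_le_log_iff (Finset.prod_pos fun k _ => Phi_pos _) (pow_pos (Phi_pos _) _),
    Real.log_prod (fun k _ => (Phi_pos _).ne'), Real.log_pow]

lemma lintegral_Ioi_Phi_pow (n : ℕ) (T : ℝ) :
    ∫⁻ z in Ioi 0, ENNReal.ofReal (Phi (T * z) ^ n) ∂(gaussianReal 0 1)
      = ENNReal.ofReal (∫ y in Ioi (0 : ℝ), Phi (T * y) ^ n * stdNormalPDF y) := by
  have hmeas : Measurable (fun z => Phi (T * z) ^ n) :=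
    (Phi_mono.measurable.comp (measurable_const_mul T)).pow_const _
  have hPhi (z : ℝ) : 0 ≤ Phi (T * z) ^ n := pow_nonneg (Phi_nonneg _) _
  have hpdf (z : ℝ) : 0 ≤ stdNormalPDF z := gaussianPDFReal_nonneg 0 1 z
  have hint : IntegrableOn (fun y => Phi (T * y) ^ n * stdNormalPDF y) (Ioi 0) := by
    refine (integrable_gaussianPDFReal 0 1).integrableOn.mono'
      (hmeas.mul (measurable_gaussianPDFReal 0 1)).aestronglyMeasurable (ae_of_all _ fun z => ?_)
    rw [Real.norm_of_nonneg (mul_nonneg (hPhi z) (hpdf z))]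
    exact mul_le_of_le_one_left (hpdf z) (pow_le_one₀ (Phi_nonneg _) (Phi_le_one _))
  rw [ofReal_integral_eq_lintegral_ofReal hint (ae_of_all _ fun z => mul_nonneg (hPhi z) (hpdf z)),
    gaussianReal_of_var_ne_zero _ one_ne_zero, restrict_withDensity measurableSet_Ioi,
    lintegral_withDensity_eq_lintegral_mul _ (measurable_gaussianPDF 0 1) hmeas.ennreal_ofReal]
  refine lintegral_congr fun z => ?_
  rw [Pi.mul_apply, mul_comm, ENNReal.ofReal_mul (hPhi z)]
  rfl

lemma integral_Phi_pow_mul_stdNormalPDF_nonneg (T : ℝ) (n : ℕ) :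
    0 ≤ ∫ y in Ioi (0 : ℝ), Phi (T * y) ^ n * stdNormalPDF y :=
  integral_nonneg fun _ => mul_nonneg (pow_nonneg (Phi_nonneg _) _) (gaussianPDFReal_nonneg 0 1 _)

lemma half_pow_le_sInf (q : ℕ) {w : ℝ} (hw : 0 ≤ w) :
    (1 / 2 : ℝ) ^ (q - 1) ≤ sInf ((fun t : ℝ => Phi (Real.sqrt ((q : ℝ) - 1) * w * t) ^ (q - 1)
        + 2 * Phi (-(q : ℝ) * t)) '' Ioi 0) := by
  refine le_csInf (nonempty_Ioi.image _) ?_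
  rintro _ ⟨t, ht, rfl⟩
  have ht0 : 0 ≤ t := le_of_lt ht
  have hhalf : 1 / 2 ≤ Phi (Real.sqrt ((q : ℝ) - 1) * w * t) :=
    Phi_zero ▸ Phi_mono (by positivity)
  have htail := Phi_nonneg (-(q : ℝ) * t)
  have hpow := pow_le_pow_left₀ (by norm_num) hhalf (q - 1)
  simp only
  linarith

lemma half_pow_add_integral_le_xiBound (q : ℕ) {w : ℝ} (hw : 0 ≤ w) (ρ : ℝ) :
    (1 / 2 : ℝ) ^ (q - 1) + ∫ y in Ioi (0 : ℝ), Phi ((1 - w) * ρ * y) ^ (q - 1) * stdNormalPDF y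
      ≤ xiBound q w ρ := by
  have hpow : (0 : ℝ) ≤ (1 / 2) ^ (q + 1) := by positivity
  have hinf := half_pow_le_sInf q hw
  rw [xiBound]
  linarith

/-! ### Negative dependence of Gaussian vectors -/

lemma setLIntegral_Iic_le_mul_lintegral {α : Type*} [MeasurableSpace α] [TopologicalSpace α]
    [LinearOrder α] [ClosedIicTopology α] [OpensMeasurableSpace α] (ν : Measure α)
    [IsProbabilityMeasure ν] {p : α → ENNReal} (hp : Monotone p) (u : α) :
    ∫⁻ x in Iic u, p x ∂ν ≤ ν (Iic u) * ∫⁻ x, p x ∂ν := by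
  have hone : ν (Iic u) + ν (Ioi u) = 1 := by
    rw [← compl_Iic, measure_add_measure_compl measurableSet_Iic, measure_univ]
  have hbelow : ∫⁻ x in Iic u, p x ∂ν ≤ p u * ν (Iic u) := by
    rw [← setLIntegral_const]
    exact setLIntegral_mono' measurableSet_Iic fun x hx => hp hx
  have habove : p u * ν (Ioi u) ≤ ∫⁻ x in Ioi u, p x ∂ν := by
    rw [← setLIntegral_const]
    exact setLIntegral_mono' measurableSet_Ioi fun x hx => hp (le_of_lt hx)
  calc ∫⁻ x in Iic u, p x ∂ν
      = (ν (Iic u) + ν (Ioi u)) * ∫⁻ x in Iic u, p x ∂ν := by rw [hone, one_mul]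
    _ ≤ ν (Iic u) * ∫⁻ x in Iic u, p x ∂ν + ν (Ioi u) * (p u * ν (Iic u)) := by
        rw [add_mul]; gcongr
    _ = ν (Iic u) * (∫⁻ x in Iic u, p x ∂ν + p u * ν (Ioi u)) := by ring
    _ ≤ ν (Iic u) * (∫⁻ x in Iic u, p x ∂ν + ∫⁻ x in Ioi u, p x ∂ν) := by gcongr
    _ = ν (Iic u) * ∫⁻ x, p x ∂ν := by rw [← compl_Iic, lintegral_add_compl _ measurableSet_Iic]

section Probability

variable {Ω : Type*} [MeasurableSpace Ω] {P : Measure Ω}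

section Independence

variable {α β : Type*} [MeasurableSpace α] [MeasurableSpace β]

lemma measure_prodMk_mem_eq_lintegral [IsFiniteMeasure P] {X : Ω → α} {Y : Ω → β}
    (hXY : IndepFun X Y P) (hX : AEMeasurable X P) (hY : AEMeasurable Y P) {S : Set (α × β)}
    (hS : MeasurableSet S) :
    P {ω | (X ω, Y ω) ∈ S} = ∫⁻ x, P {ω | (x, Y ω) ∈ S} ∂(P.map X) := by
  calc P {ω | (X ω, Y ω) ∈ S} = P.map (fun ω => (X ω, Y ω)) S :=
        (Measure.map_apply_of_aemeasurable (hX.prodMk hY) hS).symm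
    _ = ∫⁻ x, P.map Y (Prod.mk x ⁻¹' S) ∂(P.map X) := by
        rw [(indepFun_iff_map_prod_eq_prod_map_map hX hY).1 hXY, Measure.prod_apply hS]
    _ = ∫⁻ x, P {ω | (x, Y ω) ∈ S} ∂(P.map X) := lintegral_congr fun x =>
        Measure.map_apply_of_aemeasurable hY (measurable_prodMk_left hS)

lemma measure_le_and_prodMk_mem_le_mul [IsProbabilityMeasure P] [TopologicalSpace α]
    [LinearOrder α] [ClosedIicTopology α] [OpensMeasurableSpace α] {X : Ω → α} {Y : Ω → β}
    (hXY : IndepFun X Y P) (hX : AEMeasurable X P) (hY : AEMeasurable Y P) {S : Set (α × β)}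
    (hS : MeasurableSet S) (hmono : ∀ y, Monotone fun x => (x, y) ∈ S) (u : α) :
    P {ω | X ω ≤ u ∧ (X ω, Y ω) ∈ S} ≤ P {ω | X ω ≤ u} * P {ω | (X ω, Y ω) ∈ S} := by
  have : IsProbabilityMeasure (P.map X) := Measure.isProbabilityMeasure_map hX
  have hIic : MeasurableSet {z : α × β | z.1 ≤ u} := measurable_fst measurableSet_Iic
  have hsection : Monotone fun x => P {ω | (x, Y ω) ∈ S} := fun x x' hx =>
    measure_mono fun ω hω => hmono (Y ω) hx hω
  have hrestrict : P {ω | X ω ≤ u ∧ (X ω, Y ω) ∈ S}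
      = ∫⁻ x in Iic u, P {ω | (x, Y ω) ∈ S} ∂(P.map X) := by
    rw [← lintegral_indicator measurableSet_Iic]
    refine (measure_prodMk_mem_eq_lintegral hXY hX hY (hIic.inter hS)).trans
      (lintegral_congr fun x => ?_)
    by_cases hx : x ≤ u
    · simp only [mem_inter_iff, mem_ofPred_eq, hx, true_and, mem_Iic, indicator_of_mem]
    · simp only [mem_inter_iff, mem_ofPred_eq, hx, false_and, ofPred_false, measure_empty, mem_Iic,
        not_false_eq_true, indicator_of_notMem]
  rw [hrestrict, measure_prodMk_mem_eq_lintegral hXY hX hY hS,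
    ← show P.map X (Iic u) = P {ω | X ω ≤ u} from
      Measure.map_apply_of_aemeasurable hX measurableSet_Iic]
  exact setLIntegral_Iic_le_mul_lintegral _ hsection u

end Independence

lemma covariance_eq_zero_of_variance_eq_zero [IsFiniteMeasure P] {X : Ω → ℝ} (hX : MemLp X 2 P)
    (h : Var[X; P] = 0) (Y : Ω → ℝ) : cov[X, Y; P] = 0 := by
  refine integral_eq_zero_of_ae ?_
  filter_upwards [ae_eq_integral_of_variance_eq_zero hX h] with ω hω
  rw [hω, sub_self, zero_mul, Pi.zero_apply]

/-- The residual of `Y` after linear regression (without intercept) on `W`. It is `Y` itself when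
`W` is almost surely constant. -/
def regResidual (P : Measure Ω) (W Y : Ω → ℝ) : Ω → ℝ := fun ω =>
  Y ω - cov[Y, W; P] / Var[W; P] * W ω

lemma covariance_regResidual_right [IsFiniteMeasure P] {W Y : Ω → ℝ} (hW : MemLp W 2 P)
    (hY : MemLp Y 2 P) : cov[W, regResidual P W Y; P] = 0 := by
  unfold regResidual
  rw [covariance_fun_sub_right hW hY (hW.const_mul _), covariance_const_mul_right,
    covariance_self hW.aemeasurable, covariance_comm]
  rcases eq_or_ne Var[W; P] 0 with h | h
  · rw [covariance_comm, covariance_eq_zero_of_variance_eq_zero hW h, zero_div, zero_mul, sub_zero]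
  · rw [div_mul_cancel₀ _ h, sub_self]

lemma covariance_regResidual_regResidual [IsFiniteMeasure P] {W Y Z : Ω → ℝ} (hW : MemLp W 2 P)
    (hY : MemLp Y 2 P) (hZ : MemLp Z 2 P) :
    cov[regResidual P W Y, regResidual P W Z; P]
      = cov[Y, Z; P] - cov[Y, W; P] * cov[Z, W; P] / Var[W; P] := by
  have hres : MemLp (regResidual P W Z) 2 P := hZ.sub (hW.const_mul _)
  conv_lhs => arg 1; unfold regResidual
  rw [covariance_fun_sub_left hY (hW.const_mul _) hres, covariance_const_mul_left,
    covariance_regResidual_right hW hZ, mul_zero, sub_zero]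
  unfold regResidual
  rw [covariance_fun_sub_right hY hZ (hW.const_mul _), covariance_const_mul_right]
  ring

section Regression

variable {κ : Type*} [Finite κ] {W : Ω → ℝ} {Y : κ → Ω → ℝ}

lemma hasGaussianLaw_prodMk_regResidual (h : HasGaussianLaw (fun ω => (W ω, fun k => Y k ω)) P) :
    HasGaussianLaw (fun ω => (W ω, fun k => regResidual P W (Y k) ω)) P := by
  cases nonempty_fintype κ
  let L : ℝ × (κ → ℝ) →L[ℝ] ℝ × (κ → ℝ) :=
    (ContinuousLinearMap.fst ℝ ℝ (κ → ℝ)).prod <| ContinuousLinearMap.pi fun k =>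
      (ContinuousLinearMap.proj k).comp (ContinuousLinearMap.snd ℝ ℝ (κ → ℝ))
        - (cov[Y k, W; P] / Var[W; P]) • ContinuousLinearMap.fst ℝ ℝ (κ → ℝ)
  exact h.map_fun L

lemma indepFun_regResidual (h : HasGaussianLaw (fun ω => (W ω, fun k => Y k ω)) P) :
    IndepFun W (fun ω k => regResidual P W (Y k) ω) P := by
  cases nonempty_fintype κ
  have := h.isProbabilityMeasure
  let L : ℝ × (κ → ℝ) →L[ℝ] (Unit → ℝ) × (κ → ℝ) :=
    (ContinuousLinearMap.pi fun _ => ContinuousLinearMap.fst ℝ ℝ (κ → ℝ)).prod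
      (ContinuousLinearMap.snd ℝ ℝ (κ → ℝ))
  have hjoint := (hasGaussianLaw_prodMk_regResidual h).map_fun L
  have hindep := HasGaussianLaw.indepFun_of_covariance_eval (X := fun _ => W)
    (Y := fun k => regResidual P W (Y k)) hjoint fun _ k =>
      covariance_regResidual_right h.fst.memLp_two (h.snd.eval k).memLp_two
  exact hindep.comp (φ := fun f : Unit → ℝ => f ()) (measurable_pi_apply ()) measurable_id

end Regression

/-- Conditionally on `X i`, the probability that the other variables stay below their levels is
increasing in the value of `X i`, because their regression coefficients on `X i` are nonpositive. -/
lemma measure_forall_mem_le_le_prod {κ : Type*} [Finite κ] {X : κ → Ω → ℝ}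
    (hX : HasGaussianLaw (fun ω k => X k ω) P)
    (hneg : Pairwise fun k l => cov[X k, X l; P] ≤ 0) (u : κ → ℝ) (t : Finset κ) :
    P {ω | ∀ k ∈ t, X k ω ≤ u k} ≤ ∏ k ∈ t, P {ω | X k ω ≤ u k} := by
  classical
  cases nonempty_fintype κ
  have := hX.isProbabilityMeasure
  induction t using Finset.induction_on with
  | empty => simp only [Finset.notMem_empty, false_imp_iff, implies_true, ofPred_true,
      measure_univ, Finset.prod_empty, le_refl]
  | insert i t hi ih =>
    have hjoint : HasGaussianLaw (fun ω => (X i ω, fun k => X k ω)) P := by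
      let L : (κ → ℝ) →L[ℝ] ℝ × (κ → ℝ) :=
        (ContinuousLinearMap.proj i).prod (ContinuousLinearMap.id ℝ (κ → ℝ))
      exact hX.map_fun L
    let β : κ → ℝ := fun k => cov[X k, X i; P] / Var[X i; P]
    have hβ (k : κ) (hk : k ∈ t) : β k ≤ 0 :=
      div_nonpos_of_nonpos_of_nonneg (hneg (ne_of_mem_of_not_mem hk hi)) (variance_nonneg _ _)
    let S : Set (ℝ × (κ → ℝ)) := {z | ∀ k ∈ t, z.2 k + β k * z.1 ≤ u k}
    have hS : MeasurableSet S := by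
      simp only [S, ofPred_forall]
      exact Finset.measurableSet_biInter _ fun k _ =>
        measurableSet_le (by fun_prop) measurable_const
    have hmono (y : κ → ℝ) : Monotone fun x => (x, y) ∈ S := fun x x' hx hmem k hk =>
      (add_le_add_right (mul_le_mul_of_nonpos_left hx (hβ k hk)) _).trans (hmem k hk)
    have hmem (ω : Ω) :
        (X i ω, fun k => regResidual P (X i) (X k) ω) ∈ S ↔ ∀ k ∈ t, X k ω ≤ u k := by
      simp only [S, β, mem_ofPred_eq, regResidual, sub_add_cancel]
    rw [Finset.prod_insert hi]
    simp only [Finset.forall_mem_insert, ← hmem] at ih ⊢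
    exact (measure_le_and_prodMk_mem_le_mul (indepFun_regResidual hjoint) hjoint.fst.aemeasurable
      (hasGaussianLaw_prodMk_regResidual hjoint).snd.aemeasurable hS hmono (u i)).trans
      (mul_le_mul_right ih _)

end Probability

section GaussianOrthant

variable {Ω : Type*} [MeasurableSpace Ω] {P : Measure Ω}

lemma measure_le_eq_ofReal_Phi {X : Ω → ℝ} (hX : HasGaussianLaw X P) (hmean : P[X] = 0)
    (hvar : 0 < Var[X; P]) (u : ℝ) :
    P {ω | X ω ≤ u} = ENNReal.ofReal (Phi (u / √Var[X; P])) := by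
  have hsqrt : 0 < √Var[X; P] := Real.sqrt_pos.2 hvar
  have hlaw : HasLaw X (gaussianReal 0 Var[X; P].toNNReal) P :=
    ⟨hX.aemeasurable, hmean ▸ hX.map_eq_gaussianReal⟩
  have hstd : HasLaw (fun ω => X ω / √Var[X; P]) (gaussianReal 0 1) P := by
    convert gaussianReal_div_const hlaw √Var[X; P] using 2
    · rw [zero_div]
    · ext
      simp only [NNReal.coe_one, NNReal.coe_div, Real.coe_toNNReal _ hvar.le, NNReal.coe_mk,
        Real.sq_sqrt hvar.le, div_self hvar.ne']
  rw [ofReal_Phi, ← hstd.map_eq, Measure.map_apply_of_aemeasurable hstd.aemeasurable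
    measurableSet_Iic]
  simp only [preimage_ofPred_eq, Iic, div_le_div_iff_of_pos_right hsqrt]

variable {κ : Type*} [Fintype κ]

lemma measure_forall_le_le_Phi_pow {X : κ → Ω → ℝ} (hX : HasGaussianLaw (fun ω k => X k ω) P)
    (hmean : ∀ k, P[X k] = 0) {v : ℝ} (hv : 0 < v) (hvar : ∀ k, Var[X k; P] = v)
    (hneg : Pairwise fun k l => cov[X k, X l; P] ≤ 0) {u : κ → ℝ} {m : ℝ}
    (hu : ∑ k, u k ≤ Fintype.card κ * m) :
    P {ω | ∀ k, X k ω ≤ u k} ≤ ENNReal.ofReal (Phi (m / √v) ^ Fintype.card κ) := by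
  have hsum : ∑ k, u k / √v ≤ Fintype.card κ * (m / √v) := by
    rw [← Finset.sum_div, mul_div_assoc']
    gcongr
  calc P {ω | ∀ k, X k ω ≤ u k} ≤ ∏ k, P {ω | X k ω ≤ u k} := by
        simpa only [Finset.mem_univ, forall_const] using
          measure_forall_mem_le_le_prod hX hneg u Finset.univ
    _ = ENNReal.ofReal (∏ k, Phi (u k / √v)) := by
        rw [ENNReal.ofReal_prod_of_nonneg fun k _ => Phi_nonneg _]
        refine Finset.prod_congr rfl fun k _ => ?_
        rw [measure_le_eq_ofReal_Phi (hX.eval k) (hmean k) (hvar k ▸ hv), hvar]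
    _ ≤ ENNReal.ofReal (Phi (m / √v) ^ Fintype.card κ) :=
        ENNReal.ofReal_le_ofReal (prod_Phi_le_pow_card Finset.univ _ _ hsum)

section Standardised

variable {Z : Ω → ℝ} {G : κ → Ω → ℝ} (h : HasGaussianLaw (fun ω => (Z ω, fun k => G k ω)) P)
  (hZmean : P[Z] = 0) (hGmean : ∀ k, P[G k] = 0) (hZvar : Var[Z; P] = 1)
  (hGvar : ∀ k, Var[G k; P] = 1) {r : ℝ} (hr : r ^ 2 < 1) (hGZ : ∀ k, cov[G k, Z; P] = r)
  (hGG : Pairwise fun k l => cov[G k, G l; P] ≤ r ^ 2)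

include h hZmean hGmean hZvar hGvar hr hGZ hGG

lemma measure_forall_regResidual_le_le_Phi_pow {u : κ → ℝ} {m : ℝ}
    (hu : ∑ k, u k ≤ Fintype.card κ * m) :
    P {ω | ∀ k, regResidual P Z (G k) ω ≤ u k}
      ≤ ENNReal.ofReal (Phi (m / √(1 - r ^ 2)) ^ Fintype.card κ) := by
  have := h.isProbabilityMeasure
  have hR := (hasGaussianLaw_prodMk_regResidual h).snd
  have hG (k : κ) : HasGaussianLaw (G k) P := h.snd.eval k
  have hcov (k l : κ) :
      cov[regResidual P Z (G k), regResidual P Z (G l); P] = cov[G k, G l; P] - r ^ 2 := by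
    rw [covariance_regResidual_regResidual h.fst.memLp_two (hG k).memLp_two (hG l).memLp_two,
      hGZ, hGZ, hZvar, div_one, sq]
  have hvar (k : κ) : Var[regResidual P Z (G k); P] = 1 - r ^ 2 := by
    rw [← covariance_self (hR.eval k).aemeasurable, hcov, covariance_self (hG k).aemeasurable,
      hGvar]
  have hmean (k : κ) : P[regResidual P Z (G k)] = 0 := by
    simp only [regResidual]
    rw [integral_sub (hG k).integrable (h.fst.integrable.const_mul _), integral_const_mul, hGmean,
      hZmean, mul_zero, sub_zero]
  exact measure_forall_le_le_Phi_pow hR hmean (sub_pos.2 hr) hvar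
    (fun k l hkl => (hcov k l).trans_le (sub_nonpos.2 (hGG hkl))) hu

/-- Given `Z = z > 0`, the residuals of the `G k` have to stay below the levels `(θ k - r) z`, and
they are independent of `Z` and pairwise nonpositively correlated. -/
lemma measure_pos_and_forall_le_mul_le_of_variance_eq_one {θ : κ → ℝ} {τ : ℝ}
    (hθ : ∑ k, θ k ≤ Fintype.card κ * τ) :
    P {ω | 0 < Z ω ∧ ∀ k, G k ω ≤ θ k * Z ω}
      ≤ ∫⁻ z in Ioi 0, ENNReal.ofReal (Phi ((τ - r) / √(1 - r ^ 2) * z) ^ Fintype.card κ)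
          ∂(gaussianReal 0 1) := by
  have hGR (k : κ) (ω : Ω) : G k ω = regResidual P Z (G k) ω + r * Z ω := by
    simp only [regResidual, hGZ, hZvar, div_one, sub_add_cancel]
  have hlaw : P.map Z = gaussianReal 0 1 := by
    rw [h.fst.map_eq_gaussianReal, hZmean, hZvar, Real.toNNReal_one]
  have hlevel (z : ℝ) (hz : 0 < z) : ∑ k, (θ k - r) * z ≤ Fintype.card κ * ((τ - r) * z) := by
    rw [← Finset.sum_mul, Finset.sum_sub_distrib, Finset.sum_const, nsmul_eq_mul, ← mul_assoc,
      mul_sub, Finset.card_univ]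
    gcongr
  let S : Set (ℝ × (κ → ℝ)) := {p | 0 < p.1 ∧ ∀ k, p.2 k ≤ (θ k - r) * p.1}
  have hS : MeasurableSet S := by
    simp only [S, ofPred_and, ofPred_forall]
    exact (measurableSet_lt measurable_const measurable_fst).inter <|
      MeasurableSet.iInter fun k => measurableSet_le (by fun_prop) (by fun_prop)
  have := h.isProbabilityMeasure
  calc P {ω | 0 < Z ω ∧ ∀ k, G k ω ≤ θ k * Z ω}
      = P {ω | (Z ω, fun k => regResidual P Z (G k) ω) ∈ S} := by
        simp only [S, mem_ofPred_eq, hGR, sub_mul, le_sub_iff_add_le]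
    _ = ∫⁻ z, P {ω | (z, fun k => regResidual P Z (G k) ω) ∈ S} ∂(gaussianReal 0 1) := hlaw ▸
        measure_prodMk_mem_eq_lintegral (indepFun_regResidual h) h.fst.aemeasurable
          (hasGaussianLaw_prodMk_regResidual h).snd.aemeasurable hS
    _ ≤ _ := by
        rw [← lintegral_indicator measurableSet_Ioi]
        refine lintegral_mono fun z => ?_
        by_cases hz : 0 < z
        · rw [indicator_of_mem (mem_Ioi.2 hz), div_mul_eq_mul_div]
          exact (measure_mono fun ω hω => hω.2).trans <| measure_forall_regResidual_le_le_Phi_pow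
            h hZmean hGmean hZvar hGvar hr hGZ hGG (hlevel z hz)
        · simp only [S, mem_ofPred_eq, hz, false_and, ofPred_false, measure_empty, zero_le]

end Standardised

lemma sqrt_sub_div_sqrt_div_sqrt_one_sub {V : ℝ} (hV : 0 < V) (c : ℝ) :
    (√V - c / √V) / √(1 - (c / √V) ^ 2) = (V - c) / √(V - c ^ 2) := by
  have hsqrt : 0 < √V := Real.sqrt_pos.2 hV
  have hnum : √V - c / √V = (V - c) / √V := by
    rw [sub_div, Real.div_sqrt]
  have hden : 1 - (c / √V) ^ 2 = (V - c ^ 2) / V := by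
    rw [div_pow, Real.sq_sqrt hV.le, sub_div, div_self hV.ne']
  rw [hnum, hden, Real.sqrt_div' _ hV.le, div_div_div_cancel_right₀ hsqrt.ne']

lemma measure_pos_and_forall_le_mul_le {W : Ω → ℝ} {G : κ → Ω → ℝ}
    (h : HasGaussianLaw (fun ω => (W ω, fun k => G k ω)) P) (hWmean : P[W] = 0)
    (hGmean : ∀ k, P[G k] = 0) (hGvar : ∀ k, Var[G k; P] = 1) {c : ℝ}
    (hc : c ^ 2 < Var[W; P]) (hGW : ∀ k, cov[G k, W; P] = c)
    (hGG : Pairwise fun k l => cov[G k, G l; P] ≤ 0) {θ : κ → ℝ}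
    (hθ : ∑ k, θ k ≤ Fintype.card κ) :
    P {ω | 0 < W ω ∧ ∀ k, G k ω ≤ θ k * W ω}
      ≤ ∫⁻ z in Ioi 0, ENNReal.ofReal (Phi ((Var[W; P] - c) / √(Var[W; P] - c ^ 2) * z)
          ^ Fintype.card κ) ∂(gaussianReal 0 1) := by
  set V := Var[W; P]
  have hV : 0 < V := (sq_nonneg c).trans_lt hc
  have hsqrt : 0 < √V := Real.sqrt_pos.2 hV
  let Z : Ω → ℝ := fun ω => (√V)⁻¹ * W ω
  let L : ℝ × (κ → ℝ) →L[ℝ] ℝ × (κ → ℝ) :=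
    ((√V)⁻¹ • ContinuousLinearMap.fst ℝ ℝ (κ → ℝ)).prod (ContinuousLinearMap.snd ℝ ℝ (κ → ℝ))
  have hZ : HasGaussianLaw (fun ω => (Z ω, fun k => G k ω)) P := h.map_fun L
  have hZmean : P[Z] = 0 := by
    simp only [Z, integral_const_mul, hWmean, mul_zero]
  have hZvar : Var[Z; P] = 1 := by
    simp only [Z, variance_const_mul, inv_pow, Real.sq_sqrt hV.le, V, inv_mul_cancel₀ hV.ne']
  have hGZ (k : κ) : cov[G k, Z; P] = c / √V := by
    rw [covariance_const_mul_right, hGW, inv_mul_eq_div]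
  have hr : (c / √V) ^ 2 < 1 := by
    rwa [div_pow, Real.sq_sqrt hV.le, div_lt_one hV]
  have hlevel : ∑ k, θ k * √V ≤ Fintype.card κ * √V := by
    rw [← Finset.sum_mul]
    gcongr
  have hevent : {ω | 0 < W ω ∧ ∀ k, G k ω ≤ θ k * W ω}
      = {ω | 0 < Z ω ∧ ∀ k, G k ω ≤ θ k * √V * Z ω} := by
    simp only [Z, mul_assoc, mul_inv_cancel_left₀ hsqrt.ne', inv_pos.2 hsqrt,
      mul_pos_iff_of_pos_left]
  rw [hevent, ← sqrt_sub_div_sqrt_div_sqrt_one_sub hV]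
  exact measure_pos_and_forall_le_mul_le_of_variance_eq_one hZ hZmean hGmean hZvar hGvar hr hGZ
    (fun k l hkl => (hGG hkl).trans (sq_nonneg _)) hlevel

end GaussianOrthant

/-! ### Independent Gaussian coordinates -/

section Uncorrelated

variable {Ω : Type*} [MeasurableSpace Ω] {P : Measure Ω} {ι : Type*} [Fintype ι] {X : ι → Ω → ℝ}

lemma integral_dotProduct_eq_zero (hX : ∀ i, Integrable (X i) P) (hmean : ∀ i, P[X i] = 0)
    (a : ι → ℝ) : ∫ ω, a ⬝ᵥ (fun i => X i ω) ∂P = 0 := by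
  simp only [dotProduct]
  rw [integral_finsetSum _ fun i _ => (hX i).const_mul (a i)]
  simp only [integral_const_mul, hmean, mul_zero, Finset.sum_const_zero]

lemma covariance_dotProduct_right [IsFiniteMeasure P] (hX : ∀ i, MemLp (X i) 2 P)
    (huncorr : Pairwise fun i j => cov[X i, X j; P] = 0) (i : ι) (a : ι → ℝ) :
    cov[X i, fun ω => a ⬝ᵥ (fun i => X i ω); P] = a i * Var[X i; P] := by
  simp only [dotProduct]
  rw [covariance_fun_sum_right (fun j => (hX j).const_mul (a j)) (hX i),
    Finset.sum_eq_single i (fun j _ hji => ?_) fun h => absurd (Finset.mem_univ i) h]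
  · rw [covariance_const_mul_right, covariance_self (hX i).aemeasurable]
  · rw [covariance_const_mul_right, huncorr hji.symm, mul_zero]

lemma variance_dotProduct [IsFiniteMeasure P] (hX : ∀ i, MemLp (X i) 2 P)
    (huncorr : Pairwise fun i j => cov[X i, X j; P] = 0) (a : ι → ℝ) :
    Var[fun ω => a ⬝ᵥ (fun i => X i ω); P] = ∑ i, a i ^ 2 * Var[X i; P] := by
  have hterm (i : ι) : MemLp (fun ω => a i * X i ω) 2 P := (hX i).const_mul _
  have hdot : MemLp (fun ω => a ⬝ᵥ (fun i => X i ω)) 2 P := memLp_finsetSum _ fun i _ => hterm i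
  rw [← covariance_self hdot.aemeasurable]
  conv_lhs => arg 1; simp only [dotProduct]
  rw [covariance_fun_sum_left hterm hdot]
  refine Finset.sum_congr rfl fun i _ => ?_
  rw [covariance_const_mul_left, covariance_dotProduct_right hX huncorr, sq, mul_assoc]

lemma hasGaussianLaw_prodMk_dotProduct {κ : Type*} [Finite κ]
    (hX : HasGaussianLaw (fun ω i => X i ω) P) (a : ι → ℝ) (f : κ → ι) :
    HasGaussianLaw (fun ω => (a ⬝ᵥ (fun i => X i ω), fun k => X (f k) ω)) P := by
  cases nonempty_fintype κ
  let L : (ι → ℝ) →L[ℝ] ℝ × (κ → ℝ) :=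
    (dotProductBilin ℝ ℝ a).toContinuousLinearMap.prod <|
      ContinuousLinearMap.pi fun k => ContinuousLinearMap.proj (f k)
  exact hX.map_fun L

end Uncorrelated

lemma measure_eq_eq_zero_of_variance_pos {Ω : Type*} [MeasurableSpace Ω] {P : Measure Ω} {X : Ω → ℝ}
    (hX : HasGaussianLaw X P) (hvar : 0 < Var[X; P]) (c : ℝ) : P {ω | X ω = c} = 0 := by
  have := nullSingletonClass_gaussianReal (μ := P[X]) (Real.toNNReal_pos.2 hvar).ne'
  rw [← measure_singleton (μ := gaussianReal P[X] Var[X; P].toNNReal) c, ← hX.map_eq_gaussianReal,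
    Measure.map_apply_of_aemeasurable hX.aemeasurable (measurableSet_singleton c)]
  rfl

section Pi

variable {ι : Type*} [Fintype ι] (v : ι → NNReal)

lemma iIndepFun_eval_pi_gaussianReal :
    iIndepFun (fun (i : ι) (x : ι → ℝ) => x i) (Measure.pi fun i => gaussianReal 0 (v i)) :=
  iIndepFun_pi fun _ => aemeasurable_id

lemma hasLaw_eval_pi_gaussianReal (i : ι) :
    HasLaw (fun x : ι → ℝ => x i) (gaussianReal 0 (v i))
      (Measure.pi fun i => gaussianReal 0 (v i)) :=
  (measurePreserving_eval (fun i => gaussianReal 0 (v i)) i).hasLaw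

lemma hasGaussianLaw_id_pi_gaussianReal :
    HasGaussianLaw (fun x : ι → ℝ => x) (Measure.pi fun i => gaussianReal 0 (v i)) :=
  iIndepFun.hasGaussianLaw (fun i => (hasLaw_eval_pi_gaussianReal v i).hasGaussianLaw)
    (iIndepFun_eval_pi_gaussianReal v)

lemma integral_eval_pi_gaussianReal (i : ι) :
    ∫ x : ι → ℝ, x i ∂(Measure.pi fun i => gaussianReal 0 (v i)) = 0 := by
  rw [(hasLaw_eval_pi_gaussianReal v i).integral_eq, integral_id_gaussianReal]

lemma variance_eval_pi_gaussianReal (i : ι) :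
    Var[fun x : ι → ℝ => x i; Measure.pi fun i => gaussianReal 0 (v i)] = v i := by
  rw [(hasLaw_eval_pi_gaussianReal v i).variance_eq, variance_id_gaussianReal]

lemma pairwise_covariance_eval_pi_gaussianReal_eq_zero :
    Pairwise fun i j => cov[fun x : ι → ℝ => x i, fun x => x j;
      Measure.pi fun i => gaussianReal 0 (v i)] = 0 := fun i j hij =>
  ((iIndepFun_eval_pi_gaussianReal v).indepFun hij).covariance_eq_zero
    ((hasGaussianLaw_id_pi_gaussianReal v).eval i).memLp_two
    ((hasGaussianLaw_id_pi_gaussianReal v).eval j).memLp_two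

end Pi

/-! ### The rejection region of the rearrangement test -/

/-- The permutation that sorts `s` in decreasing order. -/
def rearrPerm {n : ℕ} (s : Fin n → ℝ) : Equiv.Perm (Fin n) := Fin.revPerm.trans (Tuple.sort s)

lemma rearr_apply {n : ℕ} (s : Fin n → ℝ) (i : Fin n) : rearr s i = s (rearrPerm s i) := rfl

lemma rearr_rearrPerm_symm {n : ℕ} (s : Fin n → ℝ) (i : Fin n) :
    rearr s ((rearrPerm s).symm i) = s i := by
  rw [rearr_apply, Equiv.apply_symm_apply]

lemma rearr_antitone {n : ℕ} (s : Fin n → ℝ) : Antitone (rearr s) := fun _ _ h =>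
  Tuple.monotone_sort s (Fin.rev_le_rev.2 h)

lemma add_le_rearr_zero_add_rearr_one {n : ℕ} (s : Fin (n + 2) → ℝ) {a b : Fin (n + 2)}
    (hab : a ≠ b) : s a + s b ≤ rearr s 0 + rearr s 1 := by
  have hsorted (i j : Fin (n + 2)) (hij : i < j) :
      rearr s i + rearr s j ≤ rearr s 0 + rearr s 1 :=
    add_le_add (rearr_antitone s (Fin.zero_le i))
      (rearr_antitone s (Fin.one_le_of_ne_zero (Fin.ne_zero_of_lt hij)))
  rw [← rearr_rearrPerm_symm s a, ← rearr_rearrPerm_symm s b]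
  rcases lt_or_gt_of_ne ((rearrPerm s).symm.injective.ne hab) with h | h
  · exact hsorted _ _ h
  · rw [add_comm]
    exact hsorted _ _ h

lemma add_le_zero_add_one_of_forall_le_min {n : ℕ} {s : Fin (n + 2) → ℝ}
    (h : ∀ k : Fin n, s k.succ.succ ≤ min (s 0) (s 1)) {a b : Fin (n + 2)} (hab : a ≠ b) :
    s a + s b ≤ s 0 + s 1 := by
  have h₀ (k : Fin n) := (h k).trans (min_le_left _ _)
  have h₁ (k : Fin n) := (h k).trans (min_le_right _ _)
  have hcases (i : Fin (n + 2)) : i = 0 ∨ i = 1 ∨ ∃ k : Fin n, i = k.succ.succ := by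
    refine i.cases (.inl rfl) fun i => .inr (i.cases (.inl rfl) fun k => .inr ⟨k, rfl⟩)
  rcases hcases a with rfl | rfl | ⟨k, rfl⟩ <;> rcases hcases b with rfl | rfl | ⟨l, rfl⟩
  all_goals first | exact absurd rfl hab | linarith [h₀ k, h₁ l] | linarith [h₀ l, h₁ l]
                  | linarith [h₀ k, h₁ k] | linarith

lemma zero_add_one_eq_rearr_iff {n : ℕ} (s : Fin (n + 2) → ℝ) :
    s 0 + s 1 = rearr s 0 + rearr s 1 ↔ ∀ k : Fin n, s k.succ.succ ≤ min (s 0) (s 1) := by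
  refine ⟨fun h k => ?_, fun h => le_antisymm (add_le_rearr_zero_add_rearr_one s (by simp)) ?_⟩
  · have h₀ := add_le_rearr_zero_add_rearr_one s (Fin.succ_ne_zero k.succ).symm
    have h₁ := add_le_rearr_zero_add_rearr_one s
      (a := 1) (b := k.succ.succ) (by simp [Fin.ext_iff])
    exact le_min (by linarith) (by linarith)
  · rw [rearr_apply, rearr_apply]
    exact add_le_zero_add_one_of_forall_le_min h ((rearrPerm s).injective.ne (by simp))

lemma Tstat_eq_mul_sub_sum_div (q : ℕ) (s : Fin (q + 2) → ℝ) :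
    Tstat q s = (s 0 + s 1) * (1 / 2 + 1 / q) - (∑ i, s i) / q := by
  have hsum : ∑ i, s i = s 0 + (s 1 + ∑ k : Fin q, s ⟨k.val + 2, by have := k.isLt; omega⟩) := by
    rw [Fin.sum_univ_succ, Fin.sum_univ_succ]
    rfl
  rw [hsum, Tstat]
  ring

lemma Tstat_eq_Tstat_rearr_iff {q : ℕ} (s : Fin (q + 2) → ℝ) :
    Tstat q s = Tstat q (rearr s) ↔ ∀ k : Fin q, s k.succ.succ ≤ min (s 0) (s 1) := by
  have hsum : ∑ i, rearr s i = ∑ i, s i := Equiv.sum_comp (rearrPerm s) s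
  rw [Tstat_eq_mul_sub_sum_div, Tstat_eq_mul_sub_sum_div, hsum, sub_left_inj,
    mul_left_inj' (by positivity), zero_add_one_eq_rearr_iff]

/-- The convex combination, with weight `w` on the controls, of the treated coordinate and the mean
of the controls. -/
def rejLevel (q : ℕ) (w : ℝ) (x : Fin (q + 1) → ℝ) : ℝ := (1 - w) * x 0 + w * xbar q x

/-- The rejection region of the test: no control coordinate exceeds `rejLevel`. -/
def rejSet (q : ℕ) (w : ℝ) : Set (Fin (q + 1) → ℝ) :=
  {x | ∀ k : Fin q, x k.succ ≤ rejLevel q w x}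

section RejectionRegion

variable {q : ℕ} {w : ℝ} {x : Fin (q + 1) → ℝ}

lemma xbar_le_of_forall_le (hq : q ≠ 0) {c : ℝ} (h : ∀ k : Fin q, x k.succ ≤ c) :
    xbar q x ≤ c := by
  have hq' : (0 : ℝ) < q := by positivity
  rw [xbar, div_le_iff₀ hq', mul_comm]
  simpa using Finset.sum_le_card_nsmul Finset.univ _ c fun k _ => h k

lemma xbar_le_of_mem_rejSet (hq : q ≠ 0) (hw : w < 1) (hx : x ∈ rejSet q w) :
    xbar q x ≤ x 0 := by
  have hmean : xbar q x ≤ (1 - w) * x 0 + w * xbar q x := xbar_le_of_forall_le hq hx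
  exact le_of_mul_le_mul_left (by linarith) (sub_pos.2 hw)

lemma Tstat_Svec_eq_iff_mem_rejSet (hq : q ≠ 0) (hw : w ∈ Ico (0 : ℝ) 1) :
    Tstat q (Svec q w x) = Tstat q (rearr (Svec q w x)) ↔ x ∈ rejSet q w := by
  have hzero : Svec q w x 0 = (1 + w) * (x 0 - xbar q x) := rfl
  have hone : Svec q w x 1 = (1 - w) * (x 0 - xbar q x) := rfl
  have hctrl (k : Fin q) : Svec q w x k.succ.succ = x k.succ - xbar q x := rfl
  have hrej (k : Fin q) : x k.succ ≤ rejLevel q w x ↔ Svec q w x k.succ.succ ≤ Svec q w x 1 := by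
    rw [hctrl, hone, sub_le_iff_le_add, rejLevel]
    ring_nf
  rw [Tstat_eq_Tstat_rearr_iff]
  refine ⟨fun h k => (hrej k).2 ((h k).trans (min_le_right _ _)), fun h k => ?_⟩
  have hle : Svec q w x 1 ≤ Svec q w x 0 := by
    rw [hone, hzero]
    exact mul_le_mul_of_nonneg_right (by linarith [hw.1])
      (sub_nonneg.2 (xbar_le_of_mem_rejSet hq hw.2 h))
  exact ((hrej k).1 (h k)).trans (le_min hle le_rfl)

lemma phiTest_eq_indicator_rejSet (hq : q ≠ 0) (hw : w ∈ Ico (0 : ℝ) 1) :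
    phiTest q x w = (rejSet q w).indicator 1 x := by
  classical
  simp only [phiTest, indicator_apply, Tstat_Svec_eq_iff_mem_rejSet hq hw, Pi.one_apply]

lemma mul_sub_mem_rejSet_iff (hq : q ≠ 0) {r : ℝ} (hr : 0 < r) (θ : ℝ) :
    (fun i => r * (x i - θ)) ∈ rejSet q w ↔ x ∈ rejSet q w := by
  have hmean : xbar q (fun i => r * (x i - θ)) = r * (xbar q x - θ) := by
    simp only [xbar, ← Finset.mul_sum, Finset.sum_sub_distrib, Finset.sum_const,
      Finset.card_univ, Fintype.card_fin, nsmul_eq_mul]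
    field_simp
  have hlevel : rejLevel q w (fun i => r * (x i - θ)) = r * (rejLevel q w x - θ) := by
    rw [rejLevel, rejLevel, hmean]
    ring
  refine forall_congr' fun k => ?_
  rw [hlevel, mul_le_mul_iff_right₀ hr, sub_le_sub_iff_right]

end RejectionRegion

lemma frontier_iInter_subset {α ι : Type*} [TopologicalSpace α] [Finite ι] (s : ι → Set α) :
    frontier (⋂ i, s i) ⊆ ⋃ i, frontier (s i) := by
  rintro x ⟨hcl, hint⟩
  rw [interior_iInter_of_finite, mem_iInter, not_forall] at hint
  obtain ⟨i, hi⟩ := hint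
  exact mem_iUnion.2 ⟨i, closure_mono (iInter_subset s i) hcl, hi⟩

@[fun_prop]
lemma continuous_rejLevel (q : ℕ) (w : ℝ) : Continuous (rejLevel q w) := by
  unfold rejLevel xbar; fun_prop

lemma isClosed_rejSet (q : ℕ) (w : ℝ) : IsClosed (rejSet q w) := by
  simp only [rejSet, ofPred_forall]
  exact isClosed_iInter fun k => isClosed_le (by fun_prop) (by fun_prop)

lemma frontier_rejSet_subset (q : ℕ) (w : ℝ) :
    frontier (rejSet q w) ⊆ ⋃ k : Fin q, {x | x k.succ = rejLevel q w x} := by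
  simp only [rejSet, ofPred_forall]
  refine (frontier_iInter_subset _).trans (iUnion_mono fun k => ?_)
  exact frontier_le_subset_eq (by fun_prop) (by fun_prop)

/-! ### The size bound in the Gaussian limit experiment -/

section Deterministic

variable {q : ℕ} {w : ℝ} {m x : Fin (q + 1) → ℝ}

lemma rejLevel_mul_rejLevel_le (hq : q ≠ 0) (hw : 0 ≤ w) (hm : ∀ k : Fin q, m k.succ ≤ m 0)
    (hx : x ∈ rejSet q w) : rejLevel q w x * rejLevel q w m ≤ rejLevel q w (m * x) := by
  set N := rejLevel q w x
  have hprod : 0 ≤ ∑ k : Fin q, (m 0 - m k.succ) * (N - x k.succ) :=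
    Finset.sum_nonneg fun k _ => mul_nonneg (sub_nonneg.2 (hm k)) (sub_nonneg.2 (hx k))
  have hexpand : ∑ k : Fin q, (m 0 - m k.succ) * (N - x k.succ)
      = q * (m 0 * N - m 0 * xbar q x - N * xbar q m + xbar q (m * x)) := by
    simp only [sub_mul, mul_sub, Finset.sum_sub_distrib, ← Finset.mul_sum, ← Finset.sum_mul,
      Finset.sum_const, Finset.card_univ, Fintype.card_fin, nsmul_eq_mul, xbar, Pi.mul_apply]
    field_simp
    ring
  have hmean : 0 ≤ m 0 * N - m 0 * xbar q x - N * xbar q m + xbar q (m * x) :=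
    nonneg_of_mul_nonneg_right (hexpand ▸ hprod) (by positivity)
  have hN : N = (1 - w) * x 0 + w * xbar q x := rfl
  have hmx : rejLevel q w (m * x) = (1 - w) * (m 0 * x 0) + w * xbar q (m * x) := rfl
  rw [hmx, rejLevel]
  linear_combination w * hmean + m 0 * hN

lemma mul_le_div_rejLevel_mul_rejLevel (hq : q ≠ 0) (hw : 0 ≤ w)
    (hm : ∀ k : Fin q, m k.succ ∈ Icc 0 (m 0)) (hpos : 0 < rejLevel q w m) (hx : x ∈ rejSet q w)
    (k : Fin q) :
    m k.succ * x k.succ ≤ m k.succ / rejLevel q w m * rejLevel q w (m * x) := by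
  have hlevel := rejLevel_mul_rejLevel_le hq hw (fun k => (hm k).2) hx
  calc m k.succ * x k.succ ≤ m k.succ * rejLevel q w x :=
        mul_le_mul_of_nonneg_left (hx k) (hm k).1
    _ ≤ m k.succ * (rejLevel q w (m * x) / rejLevel q w m) :=
        mul_le_mul_of_nonneg_left ((le_div_iff₀ hpos).2 hlevel) (hm k).1
    _ = m k.succ / rejLevel q w m * rejLevel q w (m * x) := by ring

lemma mul_nonpos_or_pos_of_mem_rejSet (hq : q ≠ 0) (hw : 0 ≤ w)
    (hm : ∀ k : Fin q, m k.succ ∈ Icc 0 (m 0)) (hpos : 0 < rejLevel q w m) (hx : x ∈ rejSet q w) :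
    (∀ k : Fin q, m k.succ * x k.succ ≤ 0) ∨ 0 < rejLevel q w (m * x) ∧
      ∀ k : Fin q, m k.succ * x k.succ ≤ m k.succ / rejLevel q w m * rejLevel q w (m * x) := by
  have hle := mul_le_div_rejLevel_mul_rejLevel hq hw hm hpos hx
  refine (le_or_gt (rejLevel q w (m * x)) 0).imp (fun hneg k => ?_) fun h => ⟨h, hle⟩
  exact (hle k).trans (mul_nonpos_of_nonneg_of_nonpos (div_nonneg (hm k).1 hpos.le) hneg)

end Deterministic

lemma sub_div_sqrt_sub_sq_le {T c D : ℝ} (hT : 0 ≤ T) (hc : c ∈ Icc 0 1) (hDc : D ≤ c)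
    (hV : c ^ 2 < T ^ 2 + D) : (T ^ 2 + D - c) / √(T ^ 2 + D - c ^ 2) ≤ T := by
  have hgap : 0 < T ^ 2 + D - c ^ 2 := sub_pos.2 hV
  rw [div_le_iff₀ (Real.sqrt_pos.2 hgap)]
  rcases le_or_gt (T ^ 2 + D - c) 0 with hneg | hpos
  · exact hneg.trans (by positivity)
  · rw [← sq_le_sq₀ hpos.le (by positivity), mul_pow, Real.sq_sqrt hgap.le]
    have hδ : (c - D) * (c - D) ≤ T ^ 2 * (c - D) :=
      mul_le_mul_of_nonneg_right (by linarith) (by linarith)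
    have hcc : 0 ≤ T ^ 2 * (c * (1 - c)) :=
      mul_nonneg (sq_nonneg T) (mul_nonneg hc.1 (sub_nonneg.2 hc.2))
    linear_combination hδ + hcc

section GaussianLevel

variable {Ω : Type*} [MeasurableSpace Ω] {P : Measure Ω} {q : ℕ} {w : ℝ} {Y : Fin (q + 1) → Ω → ℝ}

/-- The coefficient vector of the linear form `rejLevel`. -/
def rejCoeff (q : ℕ) (w : ℝ) : Fin (q + 1) → ℝ := Fin.cons (1 - w) fun _ => w / q

lemma rejLevel_eq_dotProduct (x : Fin (q + 1) → ℝ) : rejLevel q w x = rejCoeff q w ⬝ᵥ x := by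
  simp only [rejLevel, xbar, rejCoeff, dotProduct, Fin.sum_univ_succ, Fin.cons_zero, Fin.cons_succ,
    ← Finset.mul_sum]
  ring

lemma variance_rejLevel [IsFiniteMeasure P] (hY : ∀ i, MemLp (Y i) 2 P)
    (huncorr : Pairwise fun i j => cov[Y i, Y j; P] = 0) :
    Var[fun ω => rejLevel q w fun i => Y i ω; P]
      = (1 - w) ^ 2 * Var[Y 0; P] + (w / q) ^ 2 * ∑ k : Fin q, Var[Y k.succ; P] := by
  simp only [rejLevel_eq_dotProduct]
  rw [variance_dotProduct hY huncorr, Fin.sum_univ_succ]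
  simp only [rejCoeff, Fin.cons_zero, Fin.cons_succ, ← Finset.mul_sum]

lemma covariance_succ_rejLevel [IsFiniteMeasure P] (hY : ∀ i, MemLp (Y i) 2 P)
    (huncorr : Pairwise fun i j => cov[Y i, Y j; P] = 0) (k : Fin q) :
    cov[Y k.succ, fun ω => rejLevel q w fun i => Y i ω; P] = w / q * Var[Y k.succ; P] := by
  simp only [rejLevel_eq_dotProduct]
  rw [covariance_dotProduct_right hY huncorr, rejCoeff, Fin.cons_succ]

lemma card_subtype_ne_fin (j : Fin q) : Fintype.card {k // k ≠ j} = q - 1 := by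
  rw [Fintype.card_subtype_compl, Fintype.card_fin, Fintype.card_subtype_eq]

lemma sum_variance_succ_mem_Icc (hq : 2 ≤ q) {j : Fin q} (hvar : ∀ k ≠ j, Var[Y k.succ; P] = 1)
    (hvar_le : ∀ k : Fin q, Var[Y k.succ; P] ≤ 1) :
    ∑ k : Fin q, Var[Y k.succ; P] ∈ Icc (1 : ℝ) q := by
  have : Nontrivial (Fin q) := Fin.nontrivial_iff_two_le.2 hq
  obtain ⟨k, hk⟩ := exists_ne j
  refine ⟨(hvar k hk).ge.trans ?_, ?_⟩
  · exact Finset.single_le_sum (f := fun l : Fin q => Var[Y l.succ; P])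
      (fun l _ => variance_nonneg _ _) (Finset.mem_univ k)
  · simpa using Finset.sum_le_card_nsmul Finset.univ _ 1 fun k _ => hvar_le k

lemma sq_div_lt_sq_add {T S : ℝ} (hT : 0 < T) (hS : 1 ≤ S) :
    (w / q) ^ 2 < T ^ 2 + (w / q) ^ 2 * S := by
  have hle : (w / q) ^ 2 ≤ (w / q) ^ 2 * S := le_mul_of_one_le_right (sq_nonneg _) hS
  linarith [sq_pos_of_pos hT]

lemma level_slope_le (hq : q ≠ 0) (hw : w ∈ Icc (0 : ℝ) 1) {T S : ℝ} (hT : 0 < T)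
    (hS : S ∈ Icc (1 : ℝ) q) :
    (T ^ 2 + (w / q) ^ 2 * S - w / q) / √(T ^ 2 + (w / q) ^ 2 * S - (w / q) ^ 2) ≤ T := by
  have hq' : (1 : ℝ) ≤ q := Nat.one_le_cast.2 (Nat.one_le_iff_ne_zero.2 hq)
  have hc : w / q ∈ Icc (0 : ℝ) 1 :=
    ⟨div_nonneg hw.1 (by positivity), div_le_one_of_le₀ (hw.2.trans hq') (by positivity)⟩
  have hmul : (w / q) ^ 2 * q = w * (w / q) := by
    field_simp
  have hle : (w / q) ^ 2 * S ≤ w / q :=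
    calc (w / q) ^ 2 * S ≤ (w / q) ^ 2 * q := mul_le_mul_of_nonneg_left hS.2 (sq_nonneg _)
      _ = w * (w / q) := hmul
      _ ≤ w / q := mul_le_of_le_one_left hc.1 hw.2
  exact sub_div_sqrt_sub_sq_le hT.le hc hle (sq_div_lt_sq_add hT hS.1)

lemma pairwise_covariance_succ_nonpos (huncorr : Pairwise fun i j => cov[Y i, Y j; P] = 0)
    (j : Fin q) :
    Pairwise fun k l : {k // k ≠ j} => cov[Y k.1.succ, Y l.1.succ; P] ≤ 0 :=
  fun _ _ hkl => (huncorr fun h => hkl (Subtype.ext (Fin.succ_injective q h))).le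

variable (hY : HasGaussianLaw (fun ω i => Y i ω) P) (hmean : ∀ i, P[Y i] = 0)
  (huncorr : Pairwise fun i j => cov[Y i, Y j; P] = 0) {j : Fin q}
  (hvar : ∀ k ≠ j, Var[Y k.succ; P] = 1)

include hY hmean huncorr hvar

lemma measure_forall_ne_nonpos_le :
    P {ω | ∀ k : {k // k ≠ j}, Y k.1.succ ω ≤ 0} ≤ ENNReal.ofReal ((1 / 2) ^ (q - 1)) := by
  have hctrl : HasGaussianLaw (fun ω (k : {k // k ≠ j}) => Y k.1.succ ω) P :=
    (hasGaussianLaw_prodMk_dotProduct hY 0 fun k : {k // k ≠ j} => k.1.succ).snd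
  have hbound := measure_forall_le_le_Phi_pow hctrl (fun k => hmean _) one_pos
    (fun k => hvar k.1 k.2) (pairwise_covariance_succ_nonpos huncorr j) (u := 0) (m := 0) (by simp)
  rwa [zero_div, Phi_zero, card_subtype_ne_fin] at hbound

lemma measure_pos_and_forall_ne_le_mul_rejLevel_le (hq : 2 ≤ q) (hw : w ∈ Ico (0 : ℝ) 1) {ρ : ℝ}
    (hρ : 0 < ρ) (hvar_zero : Var[Y 0; P] = ρ ^ 2) (hvar_le : ∀ k : Fin q, Var[Y k.succ; P] ≤ 1)
    {θ : Fin q → ℝ} (hθ : ∑ k : {k // k ≠ j}, θ k ≤ (q - 1 : ℕ)) :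
    P {ω | 0 < rejLevel q w (fun i => Y i ω)
        ∧ ∀ k : {k // k ≠ j}, Y k.1.succ ω ≤ θ k * rejLevel q w fun i => Y i ω}
      ≤ ENNReal.ofReal (∫ y in Ioi 0, Phi ((1 - w) * ρ * y) ^ (q - 1) * stdNormalPDF y) := by
  have := hY.isProbabilityMeasure
  have hL2 (i : Fin (q + 1)) : MemLp (Y i) 2 P := (hY.eval i).memLp_two
  have hT : 0 < (1 - w) * ρ := mul_pos (sub_pos.2 hw.2) hρ
  have hS := sum_variance_succ_mem_Icc hq hvar hvar_le
  have hvarW : Var[fun ω => rejLevel q w fun i => Y i ω; P]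
      = ((1 - w) * ρ) ^ 2 + (w / q) ^ 2 * ∑ k : Fin q, Var[Y k.succ; P] := by
    rw [variance_rejLevel hL2 huncorr, hvar_zero, mul_pow]
  have hjoint : HasGaussianLaw (fun ω => (rejLevel q w fun i => Y i ω,
      fun k : {k // k ≠ j} => Y k.1.succ ω)) P := by
    simpa only [rejLevel_eq_dotProduct] using
      hasGaussianLaw_prodMk_dotProduct hY (rejCoeff q w) fun k : {k // k ≠ j} => k.1.succ
  have hWmean : ∫ ω, rejLevel q w (fun i => Y i ω) ∂P = 0 := by
    simp only [rejLevel_eq_dotProduct]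
    exact integral_dotProduct_eq_zero (fun i => (hY.eval i).integrable) hmean _
  have hcov (k : {k // k ≠ j}) :
      cov[Y k.1.succ, fun ω => rejLevel q w fun i => Y i ω; P] = w / q := by
    rw [covariance_succ_rejLevel hL2 huncorr, hvar k.1 k.2, mul_one]
  have hbound := measure_pos_and_forall_le_mul_le hjoint hWmean (fun k => hmean _)
    (fun k => hvar k.1 k.2) (hvarW ▸ sq_div_lt_sq_add hT hS.1) hcov
    (pairwise_covariance_succ_nonpos huncorr j) (θ := fun k => θ k)
    (by rwa [card_subtype_ne_fin])
  rw [hvarW, card_subtype_ne_fin] at hbound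
  rw [← lintegral_Ioi_Phi_pow]
  refine hbound.trans (setLIntegral_mono' measurableSet_Ioi fun z hz => ?_)
  have hslope := level_slope_le (by positivity) (Ico_subset_Icc_self hw) hT hS
  exact ENNReal.ofReal_le_ofReal <| pow_le_pow_left₀ (Phi_nonneg _)
    (Phi_mono (mul_le_mul_of_nonneg_right hslope (le_of_lt hz))) _

end GaussianLevel

section Weights

variable {q : ℕ} {w : ℝ} {m : Fin (q + 1) → ℝ} {j : Fin q}

lemma sum_ne_le_mul_xbar (hj : ∀ k : Fin q, m k.succ ≤ m j.succ) :
    ∑ k : {k // k ≠ j}, m k.1.succ ≤ (q - 1 : ℕ) * xbar q m := by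
  have hq : 0 < q := j.pos
  have hsum : m j.succ + ∑ k : {k // k ≠ j}, m k.1.succ = q * xbar q m := by
    rw [← Fintype.sum_eq_add_sum_subtype_ne (fun k : Fin q => m k.succ), xbar,
      mul_div_cancel₀ _ (by positivity)]
  have hmean : xbar q m ≤ m j.succ := xbar_le_of_forall_le hq.ne' hj
  rw [Nat.cast_pred hq]
  linear_combination hsum + hmean

lemma xbar_le_rejLevel (hw : w ≤ 1) (hm : xbar q m ≤ m 0) : xbar q m ≤ rejLevel q w m := by
  rw [rejLevel]
  linear_combination mul_le_mul_of_nonneg_left hm (sub_nonneg.2 hw)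

lemma sum_ne_div_rejLevel_le (hw : w ≤ 1) (hm : ∀ k : Fin q, m k.succ ≤ m 0)
    (hj : ∀ k : Fin q, m k.succ ≤ m j.succ) (hpos : 0 < rejLevel q w m) :
    ∑ k : {k // k ≠ j}, m k.1.succ / rejLevel q w m ≤ (q - 1 : ℕ) := by
  rw [← Finset.sum_div, div_le_iff₀ hpos]
  exact (sum_ne_le_mul_xbar hj).trans <| mul_le_mul_of_nonneg_left
    (xbar_le_rejLevel hw (xbar_le_of_forall_le j.pos.ne' hm)) (Nat.cast_nonneg _)

lemma rejLevel_pos (hw : w ∈ Ico 0 1) (h0 : 0 < m 0) (hm : ∀ k : Fin q, 0 ≤ m k.succ) :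
    0 < rejLevel q w m :=
  add_pos_of_pos_of_nonneg (mul_pos (sub_pos.2 hw.2) h0) <|
    mul_nonneg hw.1 (div_nonneg (Finset.sum_nonneg fun k _ => hm k) (Nat.cast_nonneg q))

lemma exists_argmin_forall_ne_le {κ : Type*} [Finite κ] {f : κ → ℝ} {c : ℝ}
    (hf : ∃ i, ∀ k ≠ i, c ≤ f k) : ∃ j, (∀ k, f j ≤ f k) ∧ ∀ k ≠ j, c ≤ f k := by
  obtain ⟨i, hi⟩ := hf
  have : Nonempty κ := ⟨i⟩
  obtain ⟨j, hj⟩ := Finite.exists_min f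
  refine ⟨j, hj, fun k hkj => ?_⟩
  rcases eq_or_ne k i with rfl | hki
  · exact (hi j hkj.symm).trans (hj k)
  · exact hi k hki

/-- The weights standardising the coordinates in the size bound: the coordinate `k + 1` is divided
by its standard deviation `σs k`, truncated from below at `c`. -/
def stdWeights (c : ℝ) (σs : Fin q → ℝ) : Fin (q + 1) → ℝ :=
  Fin.cons c⁻¹ fun k => (max (σs k) c)⁻¹

end Weights

section SizeBound

variable {Ω : Type*} [MeasurableSpace Ω] {P : Measure Ω} {q : ℕ} {w ρ : ℝ}
  {X : Fin (q + 1) → Ω → ℝ} (hX : HasGaussianLaw (fun ω i => X i ω) P) (hmean : ∀ i, P[X i] = 0)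
  (huncorr : Pairwise fun i j => cov[X i, X j; P] = 0)

include hX hmean huncorr

lemma measure_mem_rejSet_le_of_weights (hq : 2 ≤ q) (hw : w ∈ Ico 0 1) (hρ : 0 < ρ)
    {m : Fin (q + 1) → ℝ} {j : Fin q} (h0 : 0 < m 0) (hm : ∀ k : Fin q, m k.succ ∈ Icc 0 (m 0))
    (hj : ∀ k : Fin q, m k.succ ≤ m j.succ) (hvar_zero : m 0 ^ 2 * Var[X 0; P] = ρ ^ 2)
    (hvar : ∀ k ≠ j, m k.succ ^ 2 * Var[X k.succ; P] = 1)
    (hvar_le : ∀ k : Fin q, m k.succ ^ 2 * Var[X k.succ; P] ≤ 1) :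
    P {ω | (fun i => X i ω) ∈ rejSet q w} ≤ ENNReal.ofReal ((1 / 2) ^ (q - 1) +
      ∫ y in Ioi 0, Phi ((1 - w) * ρ * y) ^ (q - 1) * stdNormalPDF y) := by
  have hq0 : q ≠ 0 := by omega
  let Y (i : Fin (q + 1)) (ω : Ω) : ℝ := m i * X i ω
  let scale : (Fin (q + 1) → ℝ) →L[ℝ] Fin (q + 1) → ℝ :=
    ContinuousLinearMap.pi fun i => m i • ContinuousLinearMap.proj i
  have hY : HasGaussianLaw (fun ω i => Y i ω) P := hX.map_fun scale
  have hYmean (i : Fin (q + 1)) : P[Y i] = 0 := by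
    simp only [Y, integral_const_mul, hmean, mul_zero]
  have hYuncorr : Pairwise fun i k => cov[Y i, Y k; P] = 0 := fun i k hik => by
    simp only [Y, covariance_const_mul_left, covariance_const_mul_right, huncorr hik, mul_zero]
  have hYvar (i : Fin (q + 1)) : Var[Y i; P] = m i ^ 2 * Var[X i; P] :=
    variance_const_mul (m i) (X i) P
  have hpos := rejLevel_pos hw h0 fun k => (hm k).1
  have hsub : {ω | (fun i => X i ω) ∈ rejSet q w} ⊆
      {ω | ∀ k : {k // k ≠ j}, Y k.1.succ ω ≤ 0} ∪
      {ω | 0 < rejLevel q w (fun i => Y i ω) ∧ ∀ k : {k // k ≠ j},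
        Y k.1.succ ω ≤ m k.1.succ / rejLevel q w m * rejLevel q w fun i => Y i ω} :=
    fun ω (hω : (fun i => X i ω) ∈ rejSet q w) =>
      (mul_nonpos_or_pos_of_mem_rejSet hq0 hw.1 hm hpos hω).imp (fun h k => h k) fun h =>
        ⟨h.1, fun k => h.2 k⟩
  have hYvar_ne (k : Fin q) (hk : k ≠ j) : Var[Y k.succ; P] = 1 := (hYvar _).trans (hvar k hk)
  have hint : 0 ≤ ∫ y in Ioi 0, Phi ((1 - w) * ρ * y) ^ (q - 1) * stdNormalPDF y :=
    integral_Phi_pow_mul_stdNormalPDF_nonneg _ _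
  rw [ENNReal.ofReal_add (by positivity) hint]
  exact (measure_mono hsub).trans <| (measure_union_le _ _).trans <| add_le_add
    (measure_forall_ne_nonpos_le hY hYmean hYuncorr hYvar_ne)
    (measure_pos_and_forall_ne_le_mul_rejLevel_le hY hYmean hYuncorr hYvar_ne hq hw hρ
      ((hYvar 0).trans hvar_zero) (fun k => (hYvar _).trans_le (hvar_le k))
      (θ := fun k => m k.succ / rejLevel q w m)
      (sum_ne_div_rejLevel_le hw.2.le (fun k => (hm k).2) hj hpos))

lemma measure_mem_rejSet_le (hq : 2 ≤ q) (hw : w ∈ Ico 0 1) {σ : ℝ} (hσ : 0 < σ)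
    {σs : Fin q → ℝ} (hσs : ∀ k, 0 ≤ σs k) (hρ : ∃ j, ∀ k ≠ j, σ ≤ ρ * σs k)
    (hvar_zero : Var[X 0; P] = σ ^ 2) (hvar : ∀ k, Var[X k.succ; P] = σs k ^ 2) :
    P {ω | (fun i => X i ω) ∈ rejSet q w} ≤ ENNReal.ofReal ((1 / 2) ^ (q - 1) +
      ∫ y in Ioi 0, Phi ((1 - w) * ρ * y) ^ (q - 1) * stdNormalPDF y) := by
  have hρ0 : 0 < ρ := by
    have : Nontrivial (Fin q) := Fin.nontrivial_iff_two_le.2 hq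
    obtain ⟨j, hj⟩ := hρ
    obtain ⟨k, hk⟩ := exists_ne j
    exact pos_of_mul_pos_left (hσ.trans_le (hj k hk)) (hσs k)
  have hc : 0 < σ / ρ := div_pos hσ hρ0
  obtain ⟨j, hmin, hj⟩ : ∃ j, (∀ k, σs j ≤ σs k) ∧ ∀ k ≠ j, σ / ρ ≤ σs k :=
    exists_argmin_forall_ne_le <| hρ.imp fun j hj k hk => (div_le_iff₀' hρ0).2 (hj k hk)
  have hmax (k : Fin q) : 0 < max (σs k) (σ / ρ) := lt_max_of_lt_right hc
  refine measure_mem_rejSet_le_of_weights hX hmean huncorr hq hw hρ0 (m := stdWeights (σ / ρ) σs)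
    (j := j) (inv_pos.2 hc) (fun k => ⟨(inv_pos.2 (hmax k)).le, ?_⟩) (fun k => ?_) ?_
    (fun k hk => ?_) fun k => ?_
  · exact inv_anti₀ hc (le_max_right _ _)
  · exact inv_anti₀ (hmax j) (max_le_max_right _ (hmin k))
  · rw [hvar_zero, stdWeights, Fin.cons_zero]
    field_simp
  · have hk0 : 0 < σs k := hc.trans_le (hj k hk)
    rw [hvar, stdWeights, Fin.cons_succ, max_eq_left (hj k hk), ← mul_pow, inv_mul_cancel₀ hk0.ne',
      one_pow]
  · rw [hvar, stdWeights, Fin.cons_succ, ← mul_pow]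
    have hle : (max (σs k) (σ / ρ))⁻¹ * σs k ≤ 1 :=
      inv_mul_le_one_of_le₀ (le_max_left _ _) (hmax k).le
    exact pow_le_one₀ (mul_nonneg (inv_pos.2 (hmax k)).le (hσs k)) hle

omit hmean in
lemma measure_frontier_rejSet_eq_zero (hw : w ≠ 1) (hvar : 0 < Var[X 0; P]) :
    P {ω | (fun i => X i ω) ∈ frontier (rejSet q w)} = 0 := by
  have := hX.isProbabilityMeasure
  have hsub : {ω | (fun i => X i ω) ∈ frontier (rejSet q w)} ⊆
      ⋃ k : Fin q, {ω | X k.succ ω = rejLevel q w fun i => X i ω} := fun ω hω => by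
    simpa only [mem_iUnion, mem_ofPred_eq] using frontier_rejSet_subset q w hω
  refine measure_mono_null hsub (measure_iUnion_null fun k => ?_)
  set b : Fin (q + 1) → ℝ := Pi.single k.succ 1 - rejCoeff q w with hb
  have hdot (x : Fin (q + 1) → ℝ) : b ⬝ᵥ x = x k.succ - rejLevel q w x := by
    rw [hb, sub_dotProduct, single_one_dotProduct, rejLevel_eq_dotProduct]
  have hvar_pos : 0 < Var[fun ω => b ⬝ᵥ fun i => X i ω; P] := by
    rw [variance_dotProduct (fun i => (hX.eval i).memLp_two) huncorr]
    refine Finset.sum_pos' (fun i _ => mul_nonneg (sq_nonneg _) (variance_nonneg _ _))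
      ⟨0, Finset.mem_univ 0, mul_pos (sq_pos_of_ne_zero ?_) hvar⟩
    simpa [hb, rejCoeff, sub_eq_zero, eq_comm (a := (0 : ℝ))] using hw
  have hnull := measure_eq_eq_zero_of_variance_pos
    (hasGaussianLaw_prodMk_dotProduct hX b id).fst hvar_pos 0
  simpa only [hdot, sub_eq_zero] using hnull

end SizeBound

/-! ### Passage to the limit -/

lemma tendsto_measureReal_preimage_of_null_frontier {ι Ω E : Type*} [MeasurableSpace Ω]
    {P : Measure Ω} [IsProbabilityMeasure P] [TopologicalSpace E] [HasOuterApproxClosed E]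
    [MeasurableSpace E] [BorelSpace E] {μ : Measure E} [IsProbabilityMeasure μ] {l : Filter ι}
    {Z : ι → Ω → E} (hZ : ∀ i, Measurable (Z i))
    (hconv : ∀ f : BoundedContinuousFunction E ℝ,
      Tendsto (fun i => ∫ ω, f (Z i ω) ∂P) l (nhds (∫ x, f x ∂μ)))
    {A : Set E} (hA : MeasurableSet A) (hfr : μ (frontier A) = 0) :
    Tendsto (fun i => P.real (Z i ⁻¹' A)) l (nhds (μ.real A)) := by
  let ν (i : ι) : ProbabilityMeasure E :=
    ⟨P.map (Z i), Measure.isProbabilityMeasure_map (hZ i).aemeasurable⟩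
  have hweak : Tendsto ν l (nhds ⟨μ, inferInstance⟩) :=
    ProbabilityMeasure.tendsto_iff_forall_integral_tendsto.2 fun f => (hconv f).congr fun i =>
      (integral_map (hZ i).aemeasurable (by fun_prop)).symm
  have hlim := ProbabilityMeasure.tendsto_measure_of_null_frontier_of_tendsto' hweak hfr
  refine ((ENNReal.tendsto_toReal (measure_ne_top μ A)).comp hlim).congr fun i => ?_
  exact congrArg ENNReal.toReal (Measure.map_apply (hZ i) hA)

lemma integral_phiTest_eq_measureReal {Ω : Type*} [MeasurableSpace Ω] {P : Measure Ω} {q : ℕ}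
    (hq : q ≠ 0) {w : ℝ} (hw : w ∈ Ico 0 1) {X : Ω → Fin (q + 1) → ℝ} (hX : Measurable X) :
    ∫ ω, phiTest q (X ω) w ∂P = P.real (X ⁻¹' rejSet q w) := by
  simp only [phiTest_eq_indicator_rejSet hq hw]
  exact integral_indicator_one (hX (isClosed_rejSet q w).measurableSet)

theorem statement15_general {ι Ω : Type*} [MeasurableSpace Ω] {l : Filter ι} (P : Measure Ω)
    [IsProbabilityMeasure P] {q : ℕ} (hq : 2 ≤ q) (X : ι → Ω → Fin (q + 1) → ℝ)
    (hX : ∀ i, Measurable (X i)) (r θ : ι → ℝ) (hr : ∀ᶠ i in l, 0 < r i) {σ ρ w : ℝ} (hσ : 0 < σ)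
    {σs : Fin q → ℝ} (hσs : ∀ k, 0 ≤ σs k) (hρ : ∃ j, ∀ k ≠ j, σ ≤ ρ * σs k) (hw : w ∈ Ico 0 1)
    (hconv : ∀ f : BoundedContinuousFunction (Fin (q + 1) → ℝ) ℝ,
      Tendsto (fun i => ∫ ω, f (fun j => r i * (X i ω j - θ i)) ∂P) l
        (nhds (∫ x, f x ∂Measure.pi fun i : Fin (q + 1) => gaussianReal 0
          ((Fin.cons (σ ^ 2) (fun k => σs k ^ 2) : Fin (q + 1) → ℝ) i).toNNReal))) :
    ∃ L ≤ (1 / 2) ^ (q - 1) + ∫ y in Ioi 0, Phi ((1 - w) * ρ * y) ^ (q - 1) * stdNormalPDF y,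
      Tendsto (fun i => ∫ ω, phiTest q (X i ω) w ∂P) l (nhds L) := by
  set v : Fin (q + 1) → NNReal := fun i =>
    ((Fin.cons (σ ^ 2) (fun k => σs k ^ 2) : Fin (q + 1) → ℝ) i).toNNReal
  set μ := Measure.pi fun i => gaussianReal 0 (v i)
  have hgauss := hasGaussianLaw_id_pi_gaussianReal v
  have huncorr := pairwise_covariance_eval_pi_gaussianReal_eq_zero v
  have hvar_zero : Var[fun x => x 0; μ] = σ ^ 2 :=
    (variance_eval_pi_gaussianReal v 0).trans (Real.coe_toNNReal _ (sq_nonneg σ))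
  have hvar (k : Fin q) : Var[fun x => x k.succ; μ] = σs k ^ 2 :=
    (variance_eval_pi_gaussianReal v k.succ).trans (Real.coe_toNNReal _ (sq_nonneg (σs k)))
  have hq0 : q ≠ 0 := by omega
  have hbound := measure_mem_rejSet_le hgauss (integral_eval_pi_gaussianReal v) huncorr hq hw hσ
    hσs hρ hvar_zero hvar
  have hint := integral_Phi_pow_mul_stdNormalPDF_nonneg ((1 - w) * ρ) (q - 1)
  refine ⟨μ.real (rejSet q w), ENNReal.toReal_le_of_le_ofReal (by positivity) hbound, ?_⟩
  have hlim := tendsto_measureReal_preimage_of_null_frontier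
    (fun i => by have := hX i; fun_prop) hconv (isClosed_rejSet q w).measurableSet
    (measure_frontier_rejSet_eq_zero hgauss huncorr hw.2.ne (hvar_zero ▸ sq_pos_of_pos hσ))
  refine hlim.congr' (hr.mono fun i hi => ?_)
  refine Eq.trans ?_ (integral_phiTest_eq_measureReal hq0 hw (hX i)).symm
  congr 1 with ω
  exact mul_sub_mem_rejSet_iff hq0 hi (θ i)

/-- Theorem 2, asymptotic size with a single treated cluster. -/
theorem statement15 {Ω : Type*} [MeasurableSpace Ω] (P : Measure Ω) [IsProbabilityMeasure P]
    (q : ℕ) (hq : 2 ≤ q)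
    (θhat : ℕ → Ω → Fin (q + 1) → ℝ) (hmeas : ∀ n, Measurable (θhat n))
    (θ0 : ℝ) (σ : ℝ) (hσ : 0 < σ) (σs : Fin q → ℝ) (hσs : ∀ k, 0 ≤ σs k)
    (hone : ∀ j k : Fin q, σs j = 0 → σs k = 0 → j = k)
    (σlow σhigh α w : ℝ) (hlow : 0 < σlow) (hlh : σlow ≤ σhigh) (hσh : σ ≤ σhigh)
    (hmost : ∃ j : Fin q, ∀ k, k ≠ j → σlow ≤ σs k)
    (hw : w ∈ Set.Ioo (0 : ℝ) 1)
    (hξ : xiBound q w (σhigh / σlow) ≤ α)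
    (hconv : ∀ f : BoundedContinuousFunction (Fin (q + 1) → ℝ) ℝ,
      Tendsto (fun n : ℕ => ∫ ω, f (fun i => Real.sqrt n * (θhat n ω i - θ0)) ∂P) atTop
        (nhds (∫ x, f x ∂(Measure.pi (fun i : Fin (q + 1) =>
          gaussianReal 0
            ((Fin.cons (σ ^ 2) (fun k => (σs k) ^ 2) : Fin (q + 1) → ℝ) i).toNNReal))))) :
    ∃ L : ℝ, L ≤ α ∧
      Tendsto (fun n : ℕ => ∫ ω, phiTest q (θhat n ω) w ∂P) atTop (nhds L) := by
  have hρ : ∃ j, ∀ k ≠ j, σ ≤ σhigh / σlow * σs k := hmost.imp fun j hj k hk =>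
    calc σ ≤ σhigh / σlow * σlow := by rwa [div_mul_cancel₀ _ hlow.ne']
      _ ≤ σhigh / σlow * σs k :=
        mul_le_mul_of_nonneg_left (hj k hk) (div_nonneg (hσ.le.trans hσh) hlow.le)
  have hrate : ∀ᶠ n : ℕ in atTop, 0 < √(n : ℝ) :=
    (eventually_gt_atTop 0).mono fun n hn => Real.sqrt_pos.2 (Nat.cast_pos.2 hn)
  obtain ⟨L, hL, hlim⟩ := statement15_general P hq θhat hmeas (fun n => √n) (fun _ => θ0) hrate hσ
    hσs hρ (Ioo_subset_Ico_self hw) hconv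
  exact ⟨L, (hL.trans (half_pow_add_integral_le_xiBound q hw.1.le _)).trans hξ, hlim⟩

end
end
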